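/- Let α ∈ (0,1) and let s ≥ 1 be an integer with s < 1/α − 1. Fix a sequence p : ℕ → ℕ with p(n) → ∞ and p(n)/n → α as n → ∞. Then (1/p(n))·E[tr(Y^{−s})] → ∫_{α₋}^{α₊} √((α₊ − t)·(t − α₋))/(2·π·α·t^{s+1}) dt as n → ∞, where α₊ = (1+√α)², α₋ = (1−√α)², and the expectation is with respect to μ_{n,p(n)}. -/

import Mathlib

open MeasureTheory Matrix Filter

noncomputable section

/-- The law `μ_{n,p}` of an `n × p` matrix with independent standard Gaussian entries. -/
def gaussEnsemble (n p : ℕ) : Measure (Fin n → Fin p → ℝ) :=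
  Measure.pi fun _ => Measure.pi fun _ => ProbabilityTheory.gaussianReal 0 1

/-- `Y(Z) = (1/n) Zᵀ Z`, the Wishart matrix `W_p(n, I_p/n)` built from the Gaussian matrix `Z`. -/
def wishartOf {n p : ℕ} (Z : Fin n → Fin p → ℝ) : Matrix (Fin p) (Fin p) ℝ :=
  (n : ℝ)⁻¹ • ((Matrix.of Z)ᵀ * Matrix.of Z)

/-!
Write `mₖ` for the normalised trace of `Y⁻ᵏ`. Gaussian integration by parts, applied to
`(Z (Y + δ)⁻ᵐ⁻¹)ᵢⱼ` times a product of traces of powers of `(Y + δ)⁻¹`, gives loop equations between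
expectations of products of inverse moments of `Y + δ`. In the equation for a single moment the
nonlinear terms are handled by Chebyshev's sum inequality, which bounds the moments uniformly in `n`
and `δ` as long as their order stays below `1 / α`. Hence `δ` may tend to `0`, and as `n → ∞` all
terms of the loop equation for `E[mₘ₊₁ ∏ mₖ]` coming from derivatives of the other factors, as well
as the diagonal ones, are `O(1 / n)`. So the expectations of products converge to the products of
the numbers `cₖ` with `c₀ = 1` and `(1 - α) cₘ₊₁ = cₘ + α ∑_{l < m} cₘ₋ₗ cₗ₊₁`.

The inverse moments of the Marchenko–Pastur law satisfy the same recursion. Substituting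
`t = |e^{iθ} - √α|²`, their generating function `u(x)` is computed by the Poisson formula, and it
solves `α u² - (1 + α - x) u + 1 = 0`.
-/

/-! ### Gaussian integration by parts -/

section GaussianIntegrationByParts

open ProbabilityTheory
open scoped NNReal

theorem integrable_gaussianReal_iff {μ : ℝ} {v : ℝ≥0} (hv : v ≠ 0) {f : ℝ → ℝ} :
    Integrable f (gaussianReal μ v) ↔ Integrable fun x => gaussianPDFReal μ v x * f x := by
  rw [gaussianReal_of_var_ne_zero _ hv,
    integrable_withDensity_iff_integrable_smul₀' (by fun_prop) (by simp [gaussianPDF])]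
  simp only [toReal_gaussianPDF, smul_eq_mul]

theorem hasDerivAt_gaussianPDFReal (μ : ℝ) {v : ℝ≥0} (hv : v ≠ 0) (x : ℝ) :
    HasDerivAt (gaussianPDFReal μ v) (-((x - μ) / v * gaussianPDFReal μ v x)) x := by
  have hexponent : HasDerivAt (fun x : ℝ => -(x - μ) ^ 2 / (2 * v)) (-((x - μ) / v)) x :=
    ((((hasDerivAt_id x).sub_const μ).pow 2).neg.div_const (2 * (v : ℝ))).congr_deriv
      (by have : (v : ℝ) ≠ 0 := mod_cast hv
          simp only [id_eq]; field_simp; push_cast; ring)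
  exact (hexponent.exp.const_mul (√(2 * Real.pi * v))⁻¹).congr_deriv
    (by rw [gaussianPDFReal]; ring)

theorem integral_sub_mul_gaussianReal {μ : ℝ} {v : ℝ≥0} {f f' : ℝ → ℝ}
    (hd : ∀ x, HasDerivAt f (f' x) x) (hf : Integrable f (gaussianReal μ v))
    (hf' : Integrable f' (gaussianReal μ v))
    (hxf : Integrable (fun x => (x - μ) * f x) (gaussianReal μ v)) :
    ∫ x, (x - μ) * f x ∂gaussianReal μ v = v * ∫ x, f' x ∂gaussianReal μ v := by
  rcases eq_or_ne v 0 with rfl | hv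
  · simp
  have hv' : (v : ℝ) ≠ 0 := mod_cast hv
  rw [integrable_gaussianReal_iff hv] at hf hf' hxf
  have hparts := integral_mul_deriv_eq_deriv_mul_of_integrable (u := f)
    (v := gaussianPDFReal μ v) (fun x _ => hd x) (fun x _ => hasDerivAt_gaussianPDFReal μ hv x)
    ((hxf.const_mul (-(v : ℝ)⁻¹)).congr (.of_forall fun x => by simp only [Pi.mul_apply]; ring))
    (hf'.congr (.of_forall fun x => mul_comm _ _))
    (hf.congr (.of_forall fun x => mul_comm _ _))
  simp only [integral_gaussianReal_eq_integral_smul hv, smul_eq_mul]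
  calc ∫ x, gaussianPDFReal μ v x * ((x - μ) * f x)
      = -v * ∫ x, f x * -((x - μ) / v * gaussianPDFReal μ v x) := by
        rw [← integral_const_mul]; congr 1; ext x; field_simp
    _ = v * ∫ x, f' x * gaussianPDFReal μ v x := by rw [hparts]; ring
    _ = v * ∫ x, gaussianPDFReal μ v x * f' x := by simp only [mul_comm]

section Resample

variable {ι : Type*} [DecidableEq ι] {E : ι → Type*} [∀ i, MeasurableSpace (E i)]

theorem measurable_update_prod (i : ι) :
    Measurable (fun q : (∀ i, E i) × E i => Function.update q.1 i q.2) := by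
  refine measurable_pi_iff.2 fun k => ?_
  rcases eq_or_ne k i with rfl | h
  · simpa only [Function.update_self] using measurable_snd
  · simp only [Function.update_of_ne h]; fun_prop

variable [Fintype ι] (μ : ∀ i, Measure (E i)) [∀ i, IsProbabilityMeasure (μ i)]

theorem measurePreserving_update (i : ι) :
    MeasurePreserving (fun q : (∀ i, E i) × E i => Function.update q.1 i q.2)
      ((Measure.pi μ).prod (μ i)) (Measure.pi μ) := by
  refine ⟨measurable_update_prod i, (Measure.pi_eq fun s hs => ?_).symm⟩
  have hpreimage : (fun q : (∀ i, E i) × E i => Function.update q.1 i q.2) ⁻¹' Set.univ.pi s =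
      Set.univ.pi (Function.update s i Set.univ) ×ˢ s i := by
    ext ⟨z, x⟩
    simp only [Set.mem_preimage, Set.mem_univ_pi, Set.mem_prod,
      Function.forall_update_iff z fun k y => y ∈ s k,
      Function.forall_update_iff s fun k t => z k ∈ t, Set.mem_univ, true_and]
    exact and_comm
  rw [Measure.map_apply (measurable_update_prod i) (.univ_pi hs), hpreimage, Measure.prod_prod,
    Measure.pi_pi, ← Finset.prod_erase_mul _ _ (Finset.mem_univ i),
    ← Finset.prod_erase_mul Finset.univ (fun i => μ i (s i)) (Finset.mem_univ i),
    Function.update_self, measure_univ, mul_one]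
  congr 1
  exact Finset.prod_congr rfl fun k hk => by rw [Function.update_of_ne (Finset.ne_of_mem_erase hk)]

variable {μ} {F : Type*} [NormedAddCommGroup F] {f g : (∀ i, E i) → F}

theorem ae_integrable_comp_update (hf : Integrable f (Measure.pi μ)) (i : ι) :
    ∀ᵐ z ∂Measure.pi μ, Integrable (fun x => f (Function.update z i x)) (μ i) :=
  ((measurePreserving_update μ i).integrable_comp_of_integrable hf).prod_right_ae

theorem integral_pi_eq_integral_update [NormedSpace ℝ F] (hf : Integrable f (Measure.pi μ))
    (i : ι) :
    ∫ z, f z ∂Measure.pi μ = ∫ z, ∫ x, f (Function.update z i x) ∂μ i ∂Measure.pi μ := by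
  have hmp := measurePreserving_update μ i
  rw [← integral_prod (fun q : (∀ i, E i) × E i => f (Function.update q.1 i q.2))
    (hmp.integrable_comp_of_integrable hf)]
  nth_rw 1 [← hmp.map_eq]
  exact integral_map hmp.measurable.aemeasurable (hmp.map_eq.symm ▸ hf.1)

end Resample

theorem integral_eval_sub_mul_pi_gaussianReal {ι : Type*} [Fintype ι] [DecidableEq ι]
    {m : ι → ℝ} {v : ι → ℝ≥0} (j : ι) {f f' : (ι → ℝ) → ℝ}
    (hd : ∀ z, HasDerivAt (fun x => f (Function.update z j x)) (f' z) (z j))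
    (hf : Integrable f (Measure.pi fun i => gaussianReal (m i) (v i)))
    (hf' : Integrable f' (Measure.pi fun i => gaussianReal (m i) (v i)))
    (hxf : Integrable (fun z => (z j - m j) * f z) (Measure.pi fun i => gaussianReal (m i) (v i))) :
    ∫ z, (z j - m j) * f z ∂(Measure.pi fun i => gaussianReal (m i) (v i)) =
      v j * ∫ z, f' z ∂(Measure.pi fun i => gaussianReal (m i) (v i)) := by
  rw [integral_pi_eq_integral_update hxf j, integral_pi_eq_integral_update hf' j,
    ← integral_const_mul]
  refine integral_congr_ae ?_
  filter_upwards [ae_integrable_comp_update hf j, ae_integrable_comp_update hf' j,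
    ae_integrable_comp_update hxf j] with z h h' hx
  simp only [Function.update_self] at hx ⊢
  exact integral_sub_mul_gaussianReal (fun x => by simpa using hd (Function.update z j x)) h h' hx

/-- The matrix `Z` with its entry `(i, j)` replaced by `x`. -/
def updateEntry {m k : Type*} [DecidableEq m] [DecidableEq k] (Z : m → k → ℝ) (i : m) (j : k)
    (x : ℝ) : m → k → ℝ :=
  Function.update Z i (Function.update (Z i) j x)

theorem integral_entry_mul_gaussEnsemble {n p : ℕ} (i : Fin n) (j : Fin p)
    {f f' : (Fin n → Fin p → ℝ) → ℝ}
    (hd : ∀ Z, HasDerivAt (fun x => f (updateEntry Z i j x)) (f' Z) (Z i j))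
    (hf : Integrable f (gaussEnsemble n p)) (hf' : Integrable f' (gaussEnsemble n p))
    (hxf : Integrable (fun Z => Z i j * f Z) (gaussEnsemble n p)) :
    ∫ Z, Z i j * f Z ∂gaussEnsemble n p = ∫ Z, f' Z ∂gaussEnsemble n p := by
  unfold gaussEnsemble at *
  rw [integral_pi_eq_integral_update hxf i, integral_pi_eq_integral_update hf' i]
  refine integral_congr_ae ?_
  filter_upwards [ae_integrable_comp_update hf i, ae_integrable_comp_update hf' i,
    ae_integrable_comp_update hxf i] with Z h h' hx
  simp only [Function.update_self] at hx ⊢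
  simpa using integral_eval_sub_mul_pi_gaussianReal (m := 0) (v := 1) j
    (fun r => by simpa [updateEntry] using hd (Function.update Z i r)) h h' (by simpa using hx)

end GaussianIntegrationByParts

/-! ### Inverse moments of a matrix -/

section InverseMoments

theorem sq_apply_le_trace_mul_transpose {m k : Type*} [Fintype m] [Fintype k]
    (A : Matrix m k ℝ) (a : m) (b : k) :
    A a b ^ 2 ≤ (A * Aᵀ).trace := by
  calc A a b ^ 2 ≤ ∑ d, A a d ^ 2 := Finset.single_le_sum (f := fun d => A a d ^ 2)
        (fun _ _ => sq_nonneg _) (Finset.mem_univ b)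
    _ ≤ ∑ c, ∑ d, A c d ^ 2 := Finset.single_le_sum (f := fun c => ∑ d, A c d ^ 2)
        (fun _ _ => Finset.sum_nonneg fun _ _ => sq_nonneg _) (Finset.mem_univ a)
    _ = (A * Aᵀ).trace := by simp [trace, mul_apply, sq]

theorem posDef_add_smul_one {m : Type*} [DecidableEq m] {A : Matrix m m ℝ} (hA : A.PosSemidef)
    {δ : ℝ} (hδ : 0 < δ) : (A + δ • 1).PosDef :=
  (Matrix.PosDef.one.smul hδ).posSemidef_add hA

variable {m : Type*} [Fintype m] [DecidableEq m] {A : Matrix m m ℝ}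

/-- The normalised trace `tr (A⁻ᵏ) / dim A`, the `k`-th inverse moment of the spectral measure of
an invertible symmetric matrix `A`. -/
def invMoment (k : ℕ) (A : Matrix m m ℝ) : ℝ :=
  (A⁻¹ ^ k).trace / Fintype.card m

/-- The product of the inverse moments of `A` of the orders in the multiset `S`. -/
def invMomentProd (S : Multiset ℕ) (A : Matrix m m ℝ) : ℝ :=
  (S.map fun k => invMoment k A).prod

@[simp]
theorem invMomentProd_zero (A : Matrix m m ℝ) : invMomentProd 0 A = 1 := by
  simp [invMomentProd]

theorem invMomentProd_cons (k : ℕ) (S : Multiset ℕ) (A : Matrix m m ℝ) :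
    invMomentProd (k ::ₘ S) A = invMoment k A * invMomentProd S A := by
  simp [invMomentProd]

@[simp]
theorem invMomentProd_singleton (k : ℕ) (A : Matrix m m ℝ) :
    invMomentProd {k} A = invMoment k A := by
  simp [invMomentProd]

theorem invMoment_zero [Nonempty m] (A : Matrix m m ℝ) : invMoment 0 A = 1 := by
  simp [invMoment]

theorem trace_inv_add_smul_one_pow (hA : A.IsHermitian) {δ : ℝ}
    (hδ : ∀ i, hA.eigenvalues i + δ ≠ 0) (k : ℕ) :
    ((A + δ • 1)⁻¹ ^ k).trace = ∑ i, (hA.eigenvalues i + δ)⁻¹ ^ k := by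
  set φ := Unitary.conjStarAlgAut ℝ (Matrix m m ℝ) hA.eigenvectorUnitary with hφ
  have hspec : A = φ (diagonal hA.eigenvalues) := hA.spectral_theorem
  have hadd : A + δ • 1 = φ (diagonal fun i => hA.eigenvalues i + δ) := by
    rw [← diagonal_add, ← smul_one_eq_diagonal, map_add, map_smul, map_one,
      ← hspec]
  have hinv : (A + δ • 1)⁻¹ = φ (diagonal fun i => (hA.eigenvalues i + δ)⁻¹) := by
    refine inv_eq_right_inv ?_
    rw [hadd, ← map_mul, diagonal_mul_diagonal]
    simp [mul_inv_cancel₀ (hδ _)]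
  rw [hinv, ← map_pow, diagonal_pow, hφ, Unitary.conjStarAlgAut_apply, trace_mul_cycle,
    Unitary.coe_star_mul_self, one_mul, trace_diagonal]
  rfl

theorem invMoment_eq_sum_eigenvalues (hA : A.PosDef) (k : ℕ) :
    invMoment k A = (∑ i, (hA.1.eigenvalues i)⁻¹ ^ k) / Fintype.card m := by
  have h := trace_inv_add_smul_one_pow hA.1 (δ := 0)
    (fun i => by simpa using (hA.eigenvalues_pos i).ne') k
  simp only [zero_smul, add_zero] at h
  rw [invMoment, h]

theorem invMoment_add_smul_one_eq_sum_eigenvalues (hA : A.PosSemidef) {δ : ℝ} (hδ : 0 < δ)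
    (k : ℕ) :
    invMoment k (A + δ • 1) = (∑ i, (hA.1.eigenvalues i + δ)⁻¹ ^ k) / Fintype.card m := by
  rw [invMoment, trace_inv_add_smul_one_pow hA.1
    fun i => (add_pos_of_nonneg_of_pos (hA.eigenvalues_nonneg i) hδ).ne']

theorem invMoment_nonneg (hA : A.PosDef) (k : ℕ) : 0 ≤ invMoment k A :=
  div_nonneg (hA.inv.posSemidef.pow k).trace_nonneg (Nat.cast_nonneg _)

theorem invMoment_mul_le (hA : A.PosDef) (k l : ℕ) :
    invMoment k A * invMoment l A ≤ invMoment (k + l) A := by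
  rcases isEmpty_or_nonempty m with _ | _
  · simp [invMoment]
  have hinv : ∀ i, 0 ≤ (hA.1.eigenvalues i)⁻¹ := fun i => inv_nonneg.2 (hA.eigenvalues_pos i).le
  have hmono : Monovary (fun i => (hA.1.eigenvalues i)⁻¹ ^ k)
      (fun i => (hA.1.eigenvalues i)⁻¹ ^ l) := fun i j hij =>
    pow_le_pow_left₀ (hinv i) (lt_of_pow_lt_pow_left₀ l (hinv j) hij).le k
  have hchebyshev := hmono.sum_mul_sum_le_card_mul_sum
  have hcard : (0 : ℝ) < Fintype.card m := mod_cast Fintype.card_pos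
  simp only [invMoment_eq_sum_eigenvalues hA, pow_add]
  rw [div_mul_div_comm, div_le_div_iff₀ (mul_pos hcard hcard) hcard]
  nlinarith

theorem invMomentProd_nonneg (hA : A.PosDef) (S : Multiset ℕ) : 0 ≤ invMomentProd S A :=
  Multiset.prod_nonneg fun x hx => by
    obtain ⟨k, -, rfl⟩ := Multiset.mem_map.1 hx
    exact invMoment_nonneg hA k

theorem invMomentProd_le [Nonempty m] (hA : A.PosDef) (S : Multiset ℕ) :
    invMomentProd S A ≤ invMoment S.sum A := by
  induction S using Multiset.induction with
  | empty => simp [invMoment_zero]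
  | cons k S ih =>
    rw [invMomentProd_cons, Multiset.sum_cons]
    exact (mul_le_mul_of_nonneg_left ih (invMoment_nonneg hA k)).trans (invMoment_mul_le hA k S.sum)

theorem invMoment_mul_invMomentProd_le [Nonempty m] (hA : A.PosDef) (k : ℕ) (S : Multiset ℕ) :
    invMoment k A * invMomentProd S A ≤ invMoment (k + S.sum) A := by
  simpa only [invMomentProd_cons, Multiset.sum_cons] using invMomentProd_le hA (k ::ₘ S)

theorem invMoment_add_smul_one_le (hA : A.PosDef) {δ : ℝ} (hδ : 0 < δ) (k : ℕ) :
    invMoment k (A + δ • 1) ≤ invMoment k A := by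
  rw [invMoment_add_smul_one_eq_sum_eigenvalues hA.posSemidef hδ, invMoment_eq_sum_eigenvalues hA]
  gcongr with i
  · have := hA.eigenvalues_pos i; positivity
  · exact hA.eigenvalues_pos i
  · linarith

theorem mul_invMoment_succ_le (hA : A.PosSemidef) {δ : ℝ} (hδ : 0 < δ) (k : ℕ) :
    δ * invMoment (k + 1) (A + δ • 1) ≤ invMoment k (A + δ • 1) := by
  simp only [invMoment_add_smul_one_eq_sum_eigenvalues hA hδ]
  rw [← mul_div_assoc, Finset.mul_sum]
  gcongr with i
  have hpos := add_pos_of_nonneg_of_pos (hA.eigenvalues_nonneg i) hδ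
  calc δ * (hA.1.eigenvalues i + δ)⁻¹ ^ (k + 1)
      = (hA.1.eigenvalues i + δ)⁻¹ ^ k * (δ / (hA.1.eigenvalues i + δ)) := by ring
    _ ≤ (hA.1.eigenvalues i + δ)⁻¹ ^ k * 1 := by
        have := hA.eigenvalues_nonneg i
        gcongr
        exact (div_le_one hpos).2 (by linarith)
    _ = _ := mul_one _

/-- The regularisation `tr (A (A + δ)⁻ᵏ⁻¹) / dim A` of `invMoment k A`. -/
def regInvMoment (δ : ℝ) (k : ℕ) (A : Matrix m m ℝ) : ℝ :=
  (A * (A + δ • 1)⁻¹ ^ (k + 1)).trace / Fintype.card m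

theorem regInvMoment_eq {δ : ℝ} (hdet : IsUnit (A + δ • 1).det) (k : ℕ) :
    regInvMoment δ k A = invMoment k (A + δ • 1) - δ * invMoment (k + 1) (A + δ • 1) := by
  have hmul : A * (A + δ • 1)⁻¹ ^ (k + 1) =
      (A + δ • 1)⁻¹ ^ k - δ • (A + δ • 1)⁻¹ ^ (k + 1) := by
    have hcancel : (A + δ • 1) * (A + δ • 1)⁻¹ ^ (k + 1) = (A + δ • 1)⁻¹ ^ k := by
      rw [pow_succ', mul_nonsing_inv_cancel_left _ _ hdet]
    nth_rw 1 [add_mul, smul_mul_assoc, one_mul] at hcancel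
    exact eq_sub_of_add_eq hcancel
  rw [regInvMoment, hmul, trace_sub, trace_smul, smul_eq_mul, invMoment, invMoment]
  ring

theorem regInvMoment_nonneg (hA : A.PosSemidef) {δ : ℝ} (hδ : 0 < δ) (k : ℕ) :
    0 ≤ regInvMoment δ k A := by
  rw [regInvMoment_eq (posDef_add_smul_one hA hδ).det_pos.ne'.isUnit]
  exact sub_nonneg.2 (mul_invMoment_succ_le hA hδ k)

theorem regInvMoment_le (hA : A.PosSemidef) {δ : ℝ} (hδ : 0 < δ) (k : ℕ) :
    regInvMoment δ k A ≤ invMoment k (A + δ • 1) := by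
  have hpos := posDef_add_smul_one hA hδ
  rw [regInvMoment_eq hpos.det_pos.ne'.isUnit]
  exact sub_le_self _ (mul_nonneg hδ.le (invMoment_nonneg hpos (k + 1)))

/-- The regularisation `tr (A (A + δ)⁻ᵏ⁻¹) / dim A * invMomentProd S (A + δ)` of
`invMomentProd (k ::ₘ S) A`. -/
def regInvMomentProd (δ : ℝ) (k : ℕ) (S : Multiset ℕ) (A : Matrix m m ℝ) : ℝ :=
  regInvMoment δ k A * invMomentProd S (A + δ • 1)

theorem regInvMomentProd_nonneg (hA : A.PosSemidef) {δ : ℝ} (hδ : 0 < δ) (k : ℕ)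
    (S : Multiset ℕ) : 0 ≤ regInvMomentProd δ k S A :=
  mul_nonneg (regInvMoment_nonneg hA hδ k) (invMomentProd_nonneg (posDef_add_smul_one hA hδ) S)

theorem regInvMomentProd_le [Nonempty m] (hA : A.PosSemidef) {δ : ℝ} (hδ : 0 < δ) (k : ℕ)
    (S : Multiset ℕ) : regInvMomentProd δ k S A ≤ invMoment (k + S.sum) (A + δ • 1) :=
  (mul_le_mul_of_nonneg_right (regInvMoment_le hA hδ k)
    (invMomentProd_nonneg (posDef_add_smul_one hA hδ) S)).trans
    (invMoment_mul_invMomentProd_le (posDef_add_smul_one hA hδ) k S)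

theorem continuousAt_inv_of_isUnit_det (hA : IsUnit A.det) :
    ContinuousAt (Inv.inv : Matrix m m ℝ → Matrix m m ℝ) A :=
  continuousAt_matrix_inv A (NormedRing.inverse_continuousAt hA.unit)

theorem continuousAt_invMoment (hA : IsUnit A.det) (k : ℕ) : ContinuousAt (invMoment k) A :=
  (Continuous.continuousAt (f := fun B : Matrix m m ℝ => (B ^ k).trace / Fintype.card m)
    (by fun_prop)).comp (continuousAt_inv_of_isUnit_det hA)

theorem continuousAt_invMomentProd (hA : IsUnit A.det) (S : Multiset ℕ) :
    ContinuousAt (invMomentProd S) A :=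
  tendsto_multiset_prod S fun k _ => continuousAt_invMoment hA k

theorem tendsto_invMomentProd_add_smul_one (hA : IsUnit A.det) (S : Multiset ℕ) :
    Tendsto (fun δ : ℝ => invMomentProd S (A + δ • 1)) (nhds 0) (nhds (invMomentProd S A)) := by
  have hadd : Tendsto (fun δ : ℝ => A + δ • (1 : Matrix m m ℝ)) (nhds 0) (nhds A) := by
    have hcont : Continuous fun δ : ℝ => A + δ • (1 : Matrix m m ℝ) := by fun_prop
    simpa using hcont.tendsto 0
  exact (continuousAt_invMomentProd hA S).tendsto.comp hadd

theorem tendsto_regInvMomentProd (hA : A.PosDef) (k : ℕ) (S : Multiset ℕ) :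
    Tendsto (fun δ => regInvMomentProd δ k S A) (nhdsWithin 0 (Set.Ioi 0))
      (nhds (invMomentProd (k ::ₘ S) A)) := by
  have hlim (T : Multiset ℕ) :=
    (tendsto_invMomentProd_add_smul_one hA.det_pos.ne'.isUnit T).mono_left
      (nhdsWithin_le_nhds (s := Set.Ioi 0))
  have hδ : Tendsto (fun δ : ℝ => δ) (nhdsWithin 0 (Set.Ioi 0)) (nhds 0) := nhdsWithin_le_nhds
  have hmain := ((hlim {k}).sub (hδ.mul (hlim {k + 1}))).mul (hlim S)
  simp only [zero_mul, sub_zero, invMomentProd_singleton] at hmain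
  rw [invMomentProd_cons]
  refine hmain.congr' ?_
  filter_upwards [self_mem_nhdsWithin] with δ hδ
  rw [regInvMomentProd, regInvMoment_eq (posDef_add_smul_one hA.posSemidef hδ).det_pos.ne'.isUnit]

theorem inv_mul_le_invMoment_one_add_smul_one (hA : A.PosSemidef) (hsing : ¬ A.PosDef) {δ : ℝ}
    (hδ : 0 < δ) : (Fintype.card m * δ)⁻¹ ≤ invMoment 1 (A + δ • 1) := by
  obtain ⟨i, hi⟩ : ∃ i, hA.1.eigenvalues i = 0 := by
    contrapose! hsing
    exact hA.1.posDef_iff_eigenvalues_pos.2 fun i => (hA.eigenvalues_nonneg i).lt_of_ne' (hsing i)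
  rw [invMoment_add_smul_one_eq_sum_eigenvalues hA hδ, mul_inv, mul_comm, ← div_eq_mul_inv]
  gcongr
  calc δ⁻¹ = (hA.1.eigenvalues i + δ)⁻¹ ^ 1 := by simp [hi]
    _ ≤ ∑ i, (hA.1.eigenvalues i + δ)⁻¹ ^ 1 :=
        Finset.single_le_sum (f := fun i => (hA.1.eigenvalues i + δ)⁻¹ ^ 1)
          (fun j _ => by have := hA.eigenvalues_nonneg j; positivity) (Finset.mem_univ i)

theorem invMoment_add_smul_one_le_inv_pow [Nonempty m] (hA : A.PosSemidef) {δ : ℝ} (hδ : 0 < δ)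
    (k : ℕ) : invMoment k (A + δ • 1) ≤ δ⁻¹ ^ k := by
  induction k with
  | zero => simp [invMoment_zero]
  | succ k ih =>
    rw [pow_succ', ← div_eq_inv_mul, le_div_iff₀' hδ]
    exact (mul_invMoment_succ_le hA hδ k).trans ih

end InverseMoments

/-! ### Differentiation of inverse moments -/

section Derivatives

section Matrix

variable {l k : Type*} [Finite l] [Finite k] {x : ℝ}

theorem hasDerivAt_matrix_mul {m : Type*} [Fintype m] {A : ℝ → Matrix l m ℝ}
    {B : ℝ → Matrix m k ℝ} {A' : Matrix l m ℝ} {B' : Matrix m k ℝ}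
    (hA : HasDerivAt A A' x) (hB : HasDerivAt B B' x) :
    HasDerivAt (fun t => A t * B t) (A' * B x + A x * B') x := by
  have := Fintype.ofFinite l
  have := Fintype.ofFinite k
  refine hasDerivAt_pi.2 fun i => hasDerivAt_pi.2 fun j => ?_
  simp only [mul_apply, Matrix.add_apply, ← Finset.sum_add_distrib]
  exact HasDerivAt.fun_sum fun c _ =>
    (hasDerivAt_pi.1 (hasDerivAt_pi.1 hA i) c).fun_mul (hasDerivAt_pi.1 (hasDerivAt_pi.1 hB c) j)

theorem hasDerivAt_matrix_transpose {A : ℝ → Matrix l k ℝ} {A' : Matrix l k ℝ}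
    (hA : HasDerivAt A A' x) : HasDerivAt (fun t => (A t)ᵀ) A'ᵀ x := by
  have := Fintype.ofFinite l
  have := Fintype.ofFinite k
  exact hasDerivAt_pi.2 fun j => hasDerivAt_pi.2 fun i => hasDerivAt_pi.1 (hasDerivAt_pi.1 hA i) j

theorem hasDerivAt_matrix_trace {m : Type*} [Fintype m] {A : ℝ → Matrix m m ℝ} {A' : Matrix m m ℝ}
    (hA : HasDerivAt A A' x) : HasDerivAt (fun t => (A t).trace) A'.trace x :=
  HasDerivAt.fun_sum fun i _ => hasDerivAt_pi.1 (hasDerivAt_pi.1 hA i) i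

end Matrix

theorem hasDerivAt_multiset_prod {ι : Type*} [DecidableEq ι] {g : ι → ℝ → ℝ} {g' : ι → ℝ} {x : ℝ}
    (S : Multiset ι) (hg : ∀ i ∈ S, HasDerivAt (g i) (g' i) x) :
    HasDerivAt (fun t => (S.map fun i => g i t).prod)
      (S.map fun i => ((S.erase i).map fun j => g j x).prod * g' i).sum x := by
  refine (HasFDerivAt.multiset_prod fun i hi => (hg i hi).hasFDerivAt).hasDerivAt.congr_deriv ?_
  have hsum (T : Multiset (ℝ →L[ℝ] ℝ)) : T.sum 1 = (T.map fun φ => φ 1).sum :=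
    map_multiset_sum (ContinuousLinearMap.apply ℝ ℝ (1 : ℝ)) T
  simp [hsum, Multiset.map_map]

section
attribute [local instance] Matrix.linftyOpNormedRing Matrix.linftyOpNormedAlgebra

variable {m : Type*} [Fintype m] [DecidableEq m] {A : ℝ → Matrix m m ℝ} {A' : Matrix m m ℝ} {x : ℝ}

theorem hasDerivAt_matrix_inv (hA : HasDerivAt A A' x) (hx : IsUnit (A x).det) :
    HasDerivAt (fun t => (A t)⁻¹) (-((A x)⁻¹ * A' * (A x)⁻¹)) x := by
  obtain ⟨u, hu⟩ := (isUnit_iff_isUnit_det _).2 hx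
  have hinv := hasFDerivAt_ringInverse (𝕜 := ℝ) u
  rw [hu] at hinv
  simp only [nonsing_inv_eq_ringInverse]
  exact (hinv.comp_hasDerivAt x hA).congr_deriv (by simp [← hu])

theorem hasDerivAt_matrix_inv_pow (hA : HasDerivAt A A' x) (hx : IsUnit (A x).det) (k : ℕ) :
    HasDerivAt (fun t => (A t)⁻¹ ^ k)
      (-∑ l ∈ Finset.range k, (A x)⁻¹ ^ (k - l) * A' * (A x)⁻¹ ^ (l + 1)) x := by
  refine ((hasDerivAt_matrix_inv hA hx).fun_pow' k).congr_deriv ?_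
  rw [← Finset.sum_neg_distrib]
  refine Finset.sum_congr rfl fun l hl => ?_
  have hkl : k - l = k.pred - l + 1 := by
    have := Finset.mem_range.1 hl
    simp only [Nat.pred_eq_sub_one]; omega
  rw [hkl, pow_succ _ (k.pred - l), pow_succ' _ l]
  simp only [mul_assoc, mul_neg, neg_mul]

theorem hasDerivAt_invMoment (hA : HasDerivAt A A' x) (hx : IsUnit (A x).det) (k : ℕ) :
    HasDerivAt (fun t => invMoment k (A t))
      (-(k / Fintype.card m) * ((A x)⁻¹ ^ (k + 1) * A').trace) x := by
  have htrace : ∀ l ∈ Finset.range k,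
      ((A x)⁻¹ ^ (k - l) * A' * (A x)⁻¹ ^ (l + 1)).trace = ((A x)⁻¹ ^ (k + 1) * A').trace := by
    intro l hl
    have := Finset.mem_range.1 hl
    rw [trace_mul_comm, ← mul_assoc, ← pow_add, show l + 1 + (k - l) = k + 1 by omega]
  refine ((hasDerivAt_matrix_trace (hasDerivAt_matrix_inv_pow hA hx k)).div_const
    (Fintype.card m : ℝ)).congr_deriv ?_
  rw [trace_neg, trace_sum, Finset.sum_congr rfl htrace, Finset.sum_const, Finset.card_range,
    nsmul_eq_mul]
  ring

/-- The differential of `invMomentProd S` at the invertible matrix `A`. -/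
def invMomentProdDeriv (S : Multiset ℕ) (A : Matrix m m ℝ) : Matrix m m ℝ →ₗ[ℝ] ℝ :=
  (S.map fun k => (-(k / Fintype.card m) * invMomentProd (S.erase k) A) •
    traceLinearMap m ℝ ℝ ∘ₗ LinearMap.mulLeft ℝ (A⁻¹ ^ (k + 1))).sum

theorem invMomentProdDeriv_apply (S : Multiset ℕ) (A B : Matrix m m ℝ) :
    invMomentProdDeriv S A B = (S.map fun k =>
      -(k / Fintype.card m) * invMomentProd (S.erase k) A * (A⁻¹ ^ (k + 1) * B).trace).sum := by
  rw [invMomentProdDeriv, ← LinearMap.applyₗ_apply_apply (R := ℝ) B, map_multiset_sum,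
    Multiset.map_map]
  rfl

theorem hasDerivAt_invMomentProd (hA : HasDerivAt A A' x) (hx : IsUnit (A x).det)
    (S : Multiset ℕ) :
    HasDerivAt (fun t => invMomentProd S (A t)) (invMomentProdDeriv S (A x) A') x := by
  refine (hasDerivAt_multiset_prod S fun k _ => hasDerivAt_invMoment hA hx k).congr_deriv ?_
  rw [invMomentProdDeriv_apply]
  congr 1
  refine Multiset.map_congr rfl fun k _ => ?_
  rw [← mul_assoc, mul_comm (-(_ : ℝ))]
  rfl

end

end Derivatives

section WishartDerivatives

open scoped Matrix.Norms.Elementwise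

variable {n p : ℕ}

/-- The regularised Wishart matrix `Y(Z) + δ`. -/
def regWishart (δ : ℝ) (Z : Fin n → Fin p → ℝ) : Matrix (Fin p) (Fin p) ℝ :=
  wishartOf Z + δ • 1

theorem posSemidef_wishartOf (Z : Fin n → Fin p → ℝ) : (wishartOf Z).PosSemidef :=
  (posSemidef_conjTranspose_mul_self (of Z)).smul (by positivity : 0 ≤ (n : ℝ)⁻¹)

theorem posDef_regWishart {δ : ℝ} (hδ : 0 < δ) (Z : Fin n → Fin p → ℝ) : (regWishart δ Z).PosDef :=
  posDef_add_smul_one (posSemidef_wishartOf Z) hδ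

/-- The differential of `Z ↦ Y(Z)`. -/
def wishartDeriv (Z : Fin n → Fin p → ℝ) :
    Matrix (Fin n) (Fin p) ℝ →ₗ[ℝ] Matrix (Fin p) (Fin p) ℝ where
  toFun V := (n : ℝ)⁻¹ • (Vᵀ * of Z + (of Z)ᵀ * V)
  map_add' V W := by simp only [transpose_add, Matrix.add_mul, Matrix.mul_add]; module
  map_smul' c V := by
    simp only [transpose_smul, Matrix.smul_mul, Matrix.mul_smul, RingHom.id_apply]; module

theorem hasDerivAt_regWishart {Z : ℝ → Fin n → Fin p → ℝ} {V : Matrix (Fin n) (Fin p) ℝ} {x : ℝ}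
    (hZ : HasDerivAt (fun t => of (Z t)) V x) (δ : ℝ) :
    HasDerivAt (fun t => regWishart δ (Z t)) (wishartDeriv (Z x) V) x := by
  have h := (hasDerivAt_matrix_mul (hasDerivAt_matrix_transpose hZ) hZ).const_smul (n : ℝ)⁻¹
  exact h.add_const (δ • (1 : Matrix (Fin p) (Fin p) ℝ))

theorem hasDerivAt_updateEntry (Z : Fin n → Fin p → ℝ) (i : Fin n) (j : Fin p) (x : ℝ) :
    HasDerivAt (fun t => of (updateEntry Z i j t)) (single i j 1) x := by
  refine ((hasFDerivAt_update Z (Function.update (Z i) j x)).comp_hasDerivAt x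
    (hasDerivAt_update (Z i) j x)).congr_deriv ?_
  ext a b
  rcases eq_or_ne a i with rfl | ha
  · rcases eq_or_ne b j with rfl | hb
    · simp
    · simp [hb, hb.symm]
  · simp [ha, ha.symm]

/-- The derivative of `Z ↦ Z (Y(Z) + δ)⁻ᵏ` in the direction `V`. -/
def mulInvPowDeriv (δ : ℝ) (k : ℕ) (Z : Fin n → Fin p → ℝ) (V : Matrix (Fin n) (Fin p) ℝ) :
    Matrix (Fin n) (Fin p) ℝ :=
  V * (regWishart δ Z)⁻¹ ^ k - ∑ l ∈ Finset.range k, of Z *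
    ((regWishart δ Z)⁻¹ ^ (k - l) * wishartDeriv Z V * (regWishart δ Z)⁻¹ ^ (l + 1))

theorem hasDerivAt_mul_inv_regWishart_pow {Z : ℝ → Fin n → Fin p → ℝ}
    {V : Matrix (Fin n) (Fin p) ℝ} {x δ : ℝ} (hZ : HasDerivAt (fun t => of (Z t)) V x)
    (hδ : 0 < δ) (k : ℕ) :
    HasDerivAt (fun t => of (Z t) * (regWishart δ (Z t))⁻¹ ^ k) (mulInvPowDeriv δ k (Z x) V) x := by
  refine (hasDerivAt_matrix_mul hZ (hasDerivAt_matrix_inv_pow (hasDerivAt_regWishart hZ δ)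
    (posDef_regWishart hδ _).det_pos.ne'.isUnit k)).congr_deriv ?_
  rw [Matrix.mul_neg, ← sub_eq_add_neg, Matrix.mul_sum, mulInvPowDeriv]

theorem transpose_mul_self_eq_smul_wishartOf (Z : Fin n → Fin p → ℝ) :
    (of Z)ᵀ * of Z = (n : ℝ) • wishartOf Z := by
  rcases n.eq_zero_or_pos with rfl | hn
  · ext; simp [mul_apply]
  · rw [wishartOf, smul_smul, mul_inv_cancel₀ (by positivity), one_smul]

theorem sum_single_mul_apply (n : ℕ) (B : Matrix (Fin p) (Fin p) ℝ) :
    ∑ i : Fin n, ∑ j, ((single i j 1 : Matrix (Fin n) (Fin p) ℝ) * B) i j = n * B.trace := by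
  simp [trace, single_mul_apply_same]

theorem sum_apply_smul_map_single {m k F : Type*} [Fintype m] [Fintype k] [DecidableEq m]
    [DecidableEq k] [AddCommMonoid F] [Module ℝ F] (φ : Matrix m k ℝ →ₗ[ℝ] F)
    (X : Matrix m k ℝ) : ∑ i, ∑ j, X i j • φ (single i j 1) = φ X := by
  conv_rhs => rw [matrix_eq_sum_single X]
  simp [← map_smul, smul_single]

theorem mul_single_mul_apply {l m k o : Type*} [Fintype m] [Fintype k] [DecidableEq m]
    [DecidableEq k] (M : Matrix l m ℝ) (a : m) (b : k) (N : Matrix k o ℝ) (i : l) (j : o) :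
    (M * single a b (1 : ℝ) * N) i j = M i a * N b j := by
  rw [mul_apply, Finset.sum_eq_single b]
  · simp
  · intro c _ hc
    rw [mul_single_apply_of_ne (hbj := hc), zero_mul]
  · simp

theorem sum_mul_wishartDeriv_single (Z : Fin n → Fin p → ℝ) (B C : Matrix (Fin p) (Fin p) ℝ) :
    ∑ i, ∑ j, (of Z * (B * wishartDeriv Z (single i j 1) * C)) i j =
      (Bᵀ * wishartOf Z * C).trace + (wishartOf Z * B).trace * C.trace := by
  rcases n.eq_zero_or_pos with rfl | hn
  · simp [wishartOf]
  have hentry (i : Fin n) (j : Fin p) :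
      (of Z * (B * wishartDeriv Z (single i j 1) * C)) i j = (n : ℝ)⁻¹ *
        ((of Z * B) i j * (of Z * C) i j + (of Z * B * (of Z)ᵀ) i i * C j j) := by
    have hexpand : of Z * (B * wishartDeriv Z (single i j 1) * C) = (n : ℝ)⁻¹ •
        (of Z * B * single j i (1 : ℝ) * (of Z * C) +
          of Z * B * (of Z)ᵀ * single i j (1 : ℝ) * C) := by
      simp only [wishartDeriv, LinearMap.coe_mk, AddHom.coe_mk, transpose_single, Matrix.mul_smul,
        Matrix.smul_mul, Matrix.mul_add, Matrix.add_mul, Matrix.mul_assoc]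
    rw [hexpand, Matrix.smul_apply, Matrix.add_apply, mul_single_mul_apply, mul_single_mul_apply,
      smul_eq_mul]
  have hfirst : ∑ i, ∑ j, (of Z * B) i j * (of Z * C) i j =
      (n : ℝ) * (Bᵀ * wishartOf Z * C).trace := by
    rw [← smul_eq_mul, ← trace_smul, ← Matrix.smul_mul, ← Matrix.mul_smul,
      ← transpose_mul_self_eq_smul_wishartOf, ← Matrix.mul_assoc, ← transpose_mul, Matrix.mul_assoc,
      Finset.sum_comm]
    rfl
  have hsecond : ∑ i, (of Z * B * (of Z)ᵀ) i i = n * (wishartOf Z * B).trace := by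
    change (of Z * B * (of Z)ᵀ).trace = _
    rw [trace_mul_comm, ← Matrix.mul_assoc, transpose_mul_self_eq_smul_wishartOf, Matrix.smul_mul,
      trace_smul, smul_eq_mul]
  simp only [hentry, ← Finset.mul_sum, Finset.sum_add_distrib, ← Finset.sum_mul, hfirst, hsecond]
  rw [mul_assoc (n : ℝ), ← mul_add, inv_mul_cancel_left₀ (by positivity)]
  rfl

theorem wishartDeriv_self_mul (Z : Fin n → Fin p → ℝ) (B : Matrix (Fin p) (Fin p) ℝ) :
    wishartDeriv Z (of Z * B) = Bᵀ * wishartOf Z + wishartOf Z * B := by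
  simp only [wishartDeriv, LinearMap.coe_mk, AddHom.coe_mk, wishartOf, transpose_mul, smul_add,
    Matrix.mul_smul, Matrix.smul_mul, Matrix.mul_assoc]

theorem sum_self_mul_apply (Z : Fin n → Fin p → ℝ) (B : Matrix (Fin p) (Fin p) ℝ) :
    ∑ i, ∑ j, Z i j * (of Z * B) i j = n * (wishartOf Z * B).trace := by
  rw [← smul_eq_mul, ← trace_smul, ← Matrix.smul_mul, ← transpose_mul_self_eq_smul_wishartOf,
    Matrix.mul_assoc, Finset.sum_comm]
  rfl

end WishartDerivatives

/-! ### The loop equation of the regularised ensemble -/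

section FiniteMoments

variable {Ω : Type*} {mΩ : MeasurableSpace Ω} {μ : Measure Ω} {f g : Ω → ℝ}

/-- All absolute moments of `f` under `μ` are finite; unlike integrability, this property is stable
under products. -/
def HasFiniteMoments (f : Ω → ℝ) (μ : Measure Ω) : Prop :=
  ∀ q : ℕ, MemLp f q μ

namespace HasFiniteMoments

theorem integrable (hf : HasFiniteMoments f μ) : Integrable f μ :=
  memLp_one_iff_integrable.1 (mod_cast hf 1)

theorem add (hf : HasFiniteMoments f μ) (hg : HasFiniteMoments g μ) :
    HasFiniteMoments (fun ω => f ω + g ω) μ :=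
  fun q => (hf q).add (hg q)

theorem sub (hf : HasFiniteMoments f μ) (hg : HasFiniteMoments g μ) :
    HasFiniteMoments (fun ω => f ω - g ω) μ :=
  fun q => (hf q).sub (hg q)

theorem mul (hf : HasFiniteMoments f μ) (hg : HasFiniteMoments g μ) :
    HasFiniteMoments (fun ω => f ω * g ω) μ := by
  intro q
  have : ENNReal.HolderTriple ((2 * q : ℕ) : ENNReal) ((2 * q : ℕ) : ENNReal) (q : ENNReal) := by
    constructor
    rw [Nat.cast_mul, Nat.cast_two, ENNReal.mul_inv (by simp) (by simp), ← add_mul,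
      ENNReal.inv_two_add_inv_two, one_mul]
  exact (hg (2 * q)).mul (hf (2 * q))

theorem sum {ι : Type*} (s : Finset ι) {f : ι → Ω → ℝ} (hf : ∀ i ∈ s, HasFiniteMoments (f i) μ) :
    HasFiniteMoments (fun ω => ∑ i ∈ s, f i ω) μ :=
  fun q => memLp_finsetSum s fun i hi => hf i hi q

theorem matrix_mul {l m k : Type*} [Fintype m] {A : Ω → Matrix l m ℝ} {B : Ω → Matrix m k ℝ}
    (hA : ∀ a b, HasFiniteMoments (fun ω => A ω a b) μ)
    (hB : ∀ a b, HasFiniteMoments (fun ω => B ω a b) μ) (a : l) (b : k) :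
    HasFiniteMoments (fun ω => (A ω * B ω) a b) μ :=
  sum _ fun c _ => (hA a c).mul (hB c b)

theorem matrix_trace {m : Type*} [Fintype m] {A : Ω → Matrix m m ℝ}
    (hA : ∀ a b, HasFiniteMoments (fun ω => A ω a b) μ) :
    HasFiniteMoments (fun ω => (A ω).trace) μ :=
  sum _ fun c _ => hA c c

variable [IsFiniteMeasure μ]

theorem const (c : ℝ) : HasFiniteMoments (fun _ => c) μ :=
  fun _ => memLp_const c

theorem const_mul (c : ℝ) (hf : HasFiniteMoments f μ) : HasFiniteMoments (fun ω => c * f ω) μ :=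
  (const c).mul hf

theorem multiset_sum {ι : Type*} (S : Multiset ι) {f : ι → Ω → ℝ}
    (hf : ∀ i, HasFiniteMoments (f i) μ) :
    HasFiniteMoments (fun ω => (S.map fun i => f i ω).sum) μ := by
  induction S using Multiset.induction with
  | empty => simpa using const 0
  | cons i S ih => simpa using (hf i).add ih

theorem multiset_prod {ι : Type*} (S : Multiset ι) {f : ι → Ω → ℝ}
    (hf : ∀ i, HasFiniteMoments (f i) μ) :
    HasFiniteMoments (fun ω => (S.map fun i => f i ω).prod) μ := by
  induction S using Multiset.induction with
  | empty => simpa using const 1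
  | cons i S ih => simpa using (hf i).mul ih

end HasFiniteMoments

end FiniteMoments

section LoopEquation

variable {n p : ℕ}

instance (n p : ℕ) : IsProbabilityMeasure (gaussEnsemble n p) := by
  unfold gaussEnsemble; infer_instance

theorem continuous_regWishart (δ : ℝ) :
    Continuous (regWishart δ : (Fin n → Fin p → ℝ) → Matrix (Fin p) (Fin p) ℝ) := by
  have hof : Continuous (of : (Fin n → Fin p → ℝ) → Matrix (Fin n) (Fin p) ℝ) := continuous_id
  exact ((hof.matrix_transpose.matrix_mul hof).const_smul (n : ℝ)⁻¹).add continuous_const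

theorem abs_inv_regWishart_apply_le {δ : ℝ} (hδ : 0 < δ) (Z : Fin n → Fin p → ℝ) (a b : Fin p) :
    |(regWishart δ Z)⁻¹ a b| ≤ √p * δ⁻¹ := by
  have : Nonempty (Fin p) := ⟨a⟩
  refine abs_le_of_sq_le_sq ?_ (by positivity)
  have hsymm : ((regWishart δ Z)⁻¹)ᵀ = (regWishart δ Z)⁻¹ :=
    (posDef_regWishart hδ Z).inv.isHermitian
  have hp : (0 : ℝ) < p := mod_cast a.pos
  calc (regWishart δ Z)⁻¹ a b ^ 2
      ≤ ((regWishart δ Z)⁻¹ ^ 2).trace := by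
        simpa only [hsymm, ← sq] using sq_apply_le_trace_mul_transpose (regWishart δ Z)⁻¹ a b
    _ = p * invMoment 2 (regWishart δ Z) := by
        rw [invMoment, Fintype.card_fin, mul_div_cancel₀ _ hp.ne']
    _ ≤ p * δ⁻¹ ^ 2 := by
        gcongr
        exact invMoment_add_smul_one_le_inv_pow (posSemidef_wishartOf Z) hδ 2
    _ = (√p * δ⁻¹) ^ 2 := by rw [mul_pow, Real.sq_sqrt hp.le]

theorem hasFiniteMoments_entry (i : Fin n) (j : Fin p) :
    HasFiniteMoments (fun Z : Fin n → Fin p → ℝ => Z i j) (gaussEnsemble n p) := by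
  have heval : MeasurePreserving (fun Z : Fin n → Fin p → ℝ => Z i j) (gaussEnsemble n p)
      (ProbabilityTheory.gaussianReal 0 1) :=
    (measurePreserving_eval (fun _ => ProbabilityTheory.gaussianReal 0 1) j).comp
      (measurePreserving_eval (fun _ => Measure.pi fun _ => ProbabilityTheory.gaussianReal 0 1) i)
  exact fun q => (ProbabilityTheory.memLp_id_gaussianReal q).comp_measurePreserving heval

theorem hasFiniteMoments_inv_regWishart_pow {δ : ℝ} (hδ : 0 < δ) (k : ℕ) (a b : Fin p) :
    HasFiniteMoments (fun Z : Fin n → Fin p → ℝ => ((regWishart δ Z)⁻¹ ^ k) a b)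
      (gaussEnsemble n p) := by
  have hcont : Continuous fun Z : Fin n → Fin p → ℝ => (regWishart δ Z)⁻¹ :=
    continuous_iff_continuousAt.2 fun Z =>
      (continuousAt_inv_of_isUnit_det (posDef_regWishart hδ Z).det_pos.ne'.isUnit).comp
        (continuous_regWishart δ).continuousAt
  induction k generalizing a b with
  | zero => simpa only [pow_zero] using .const _
  | succ k ih =>
    simp only [pow_succ]
    exact .matrix_mul ih (fun c d _ => MemLp.of_bound
      (hcont.matrix_elem c d).aestronglyMeasurable _
      (.of_forall fun Z => abs_inv_regWishart_apply_le hδ Z c d)) a b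

theorem hasFiniteMoments_invMomentProd_regWishart {δ : ℝ} (hδ : 0 < δ) (S : Multiset ℕ) :
    HasFiniteMoments (fun Z : Fin n → Fin p → ℝ => invMomentProd S (regWishart δ Z))
      (gaussEnsemble n p) := by
  refine .multiset_prod S fun k => ?_
  simp only [invMoment, div_eq_inv_mul]
  exact .const_mul _ (.matrix_trace (hasFiniteMoments_inv_regWishart_pow hδ k))

theorem hasFiniteMoments_wishartDeriv (V : Matrix (Fin n) (Fin p) ℝ) (a b : Fin p) :
    HasFiniteMoments (fun Z : Fin n → Fin p → ℝ => wishartDeriv Z V a b) (gaussEnsemble n p) :=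
  .const_mul _ (.add
    (.matrix_mul (A := fun _ => Vᵀ) (fun _ _ => .const _) hasFiniteMoments_entry a b)
    (.matrix_mul (A := fun Z => (of Z)ᵀ) (B := fun _ => V)
      (fun c d => hasFiniteMoments_entry d c) (fun _ _ => .const _) a b))

/-- The function `Z ↦ (Z (Y + δ)⁻ᵐ⁻¹)ᵢⱼ ∏ₖ mₖ(Y + δ)`, with `mₖ` the inverse moments of orders
`k ∈ S`, to which Gaussian integration by parts in the entry `(i, j)` is applied. -/
def loopTest (δ : ℝ) (m : ℕ) (S : Multiset ℕ) (i : Fin n) (j : Fin p) (Z : Fin n → Fin p → ℝ) : ℝ :=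
  (of Z * (regWishart δ Z)⁻¹ ^ (m + 1)) i j * invMomentProd S (regWishart δ Z)

/-- The derivative of `loopTest δ m S i j` in the entry `(i, j)`. -/
def loopTestDeriv (δ : ℝ) (m : ℕ) (S : Multiset ℕ) (i : Fin n) (j : Fin p)
    (Z : Fin n → Fin p → ℝ) : ℝ :=
  mulInvPowDeriv δ (m + 1) Z (single i j 1) i j * invMomentProd S (regWishart δ Z) +
    (of Z * (regWishart δ Z)⁻¹ ^ (m + 1)) i j *
      invMomentProdDeriv S (regWishart δ Z) (wishartDeriv Z (single i j 1))

theorem hasDerivAt_loopTest {δ : ℝ} (hδ : 0 < δ) (m : ℕ) (S : Multiset ℕ) (i : Fin n) (j : Fin p)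
    (Z : Fin n → Fin p → ℝ) :
    HasDerivAt (fun x => loopTest δ m S i j (updateEntry Z i j x)) (loopTestDeriv δ m S i j Z)
      (Z i j) := by
  have hself : updateEntry Z i j (Z i j) = Z := by simp [updateEntry]
  have hentry := hasDerivAt_updateEntry Z i j (Z i j)
  refine ((hasDerivAt_pi.1 (hasDerivAt_pi.1
    (hasDerivAt_mul_inv_regWishart_pow hentry hδ (m + 1)) i) j).fun_mul
      (hasDerivAt_invMomentProd (hasDerivAt_regWishart hentry δ)
        (posDef_regWishart hδ _).det_pos.ne'.isUnit S)).congr_deriv ?_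
  rw [hself, loopTestDeriv]

theorem hasFiniteMoments_loopTest {δ : ℝ} (hδ : 0 < δ) (m : ℕ) (S : Multiset ℕ) (i : Fin n)
    (j : Fin p) : HasFiniteMoments (loopTest δ m S i j) (gaussEnsemble n p) :=
  .mul (.matrix_mul hasFiniteMoments_entry (hasFiniteMoments_inv_regWishart_pow hδ (m + 1)) i j)
    (hasFiniteMoments_invMomentProd_regWishart hδ S)

theorem hasFiniteMoments_loopTestDeriv {δ : ℝ} (hδ : 0 < δ) (m : ℕ) (S : Multiset ℕ) (i : Fin n)
    (j : Fin p) : HasFiniteMoments (loopTestDeriv δ m S i j) (gaussEnsemble n p) := by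
  have hQ (k : ℕ) := hasFiniteMoments_inv_regWishart_pow (n := n) (p := p) hδ k
  have hP (S : Multiset ℕ) := hasFiniteMoments_invMomentProd_regWishart (n := n) (p := p) hδ S
  have hD := hasFiniteMoments_wishartDeriv (single i j (1 : ℝ))
  have hZ := hasFiniteMoments_entry (n := n) (p := p)
  unfold loopTestDeriv
  simp only [invMomentProdDeriv_apply, mulInvPowDeriv, Matrix.sub_apply, Matrix.sum_apply]
  refine .add (.mul (.sub ?_ (.sum _ fun l _ => ?_)) (hP S)) (.mul ?_ (.multiset_sum S fun k => ?_))
  · exact .matrix_mul (A := fun _ => single i j 1) (fun _ _ => .const _) (hQ (m + 1)) i j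
  · exact .matrix_mul hZ (.matrix_mul (.matrix_mul (hQ (m + 1 - l)) hD) (hQ (l + 1))) i j
  · exact .matrix_mul hZ (hQ (m + 1)) i j
  · exact .mul (.const_mul _ (hP (S.erase k))) (.matrix_trace (.matrix_mul (hQ (k + 1)) hD))

theorem trace_wishartOf_mul_inv_regWishart_pow [NeZero p] (δ : ℝ) (k : ℕ)
    (Z : Fin n → Fin p → ℝ) :
    (wishartOf Z * (regWishart δ Z)⁻¹ ^ (k + 1)).trace = p * regInvMoment δ k (wishartOf Z) := by
  rw [regInvMoment, Fintype.card_fin, mul_div_cancel₀ _ (NeZero.ne (p : ℝ)), regWishart]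

theorem sum_mul_loopTest [NeZero p] (δ : ℝ) (m : ℕ) (S : Multiset ℕ) (Z : Fin n → Fin p → ℝ) :
    ∑ i, ∑ j, Z i j * loopTest δ m S i j Z = n * p * regInvMomentProd δ m S (wishartOf Z) := by
  simp only [loopTest, ← mul_assoc, ← Finset.sum_mul]
  rw [sum_self_mul_apply, trace_wishartOf_mul_inv_regWishart_pow, regInvMomentProd, regWishart]
  ring

theorem transpose_inv_regWishart_pow {δ : ℝ} (hδ : 0 < δ) (k : ℕ) (Z : Fin n → Fin p → ℝ) :
    ((regWishart δ Z)⁻¹ ^ k)ᵀ = (regWishart δ Z)⁻¹ ^ k :=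
  ((posDef_regWishart hδ Z).inv.posSemidef.pow k).isHermitian

theorem sum_mulInvPowDeriv_single [NeZero p] {δ : ℝ} (hδ : 0 < δ) (m : ℕ)
    (Z : Fin n → Fin p → ℝ) :
    ∑ i, ∑ j, mulInvPowDeriv δ (m + 1) Z (single i j 1) i j =
      n * p * invMoment (m + 1) (regWishart δ Z) - ∑ l ∈ Finset.range (m + 1),
        (p * regInvMoment δ (m + 1) (wishartOf Z) + p * regInvMoment δ (m - l) (wishartOf Z) *
          (p * invMoment (l + 1) (regWishart δ Z))) := by
  have htrace (k : ℕ) : ((regWishart δ Z)⁻¹ ^ k).trace = p * invMoment k (regWishart δ Z) := by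
    rw [invMoment, Fintype.card_fin, mul_div_cancel₀ _ (NeZero.ne (p : ℝ))]
  simp only [mulInvPowDeriv, Matrix.sub_apply, Matrix.sum_apply, Finset.sum_sub_distrib]
  rw [sum_single_mul_apply, htrace, ← mul_assoc]
  congr 1
  rw [Finset.sum_congr rfl fun i _ => Finset.sum_comm, Finset.sum_comm]
  refine Finset.sum_congr rfl fun l hl => ?_
  have hlm : m + 1 - l = m - l + 1 := by have := Finset.mem_range.1 hl; omega
  rw [hlm, sum_mul_wishartDeriv_single, htrace, trace_wishartOf_mul_inv_regWishart_pow,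
    transpose_inv_regWishart_pow hδ, Matrix.mul_assoc, trace_mul_comm, Matrix.mul_assoc, ← pow_add,
    show l + 1 + (m - l + 1) = m + 1 + 1 by omega, trace_wishartOf_mul_inv_regWishart_pow]

theorem sum_mul_invMomentProdDeriv [NeZero p] {δ : ℝ} (hδ : 0 < δ) (m : ℕ) (S : Multiset ℕ)
    (Z : Fin n → Fin p → ℝ) :
    ∑ i, ∑ j, (of Z * (regWishart δ Z)⁻¹ ^ (m + 1)) i j *
        invMomentProdDeriv S (regWishart δ Z) (wishartDeriv Z (single i j 1)) =
      -2 * (S.map fun k => k * regInvMomentProd δ (m + 1 + k) (S.erase k) (wishartOf Z)).sum := by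
  have hcontract := sum_apply_smul_map_single
    (invMomentProdDeriv S (regWishart δ Z) ∘ₗ wishartDeriv Z)
    (of Z * (regWishart δ Z)⁻¹ ^ (m + 1))
  simp only [LinearMap.comp_apply, smul_eq_mul] at hcontract
  rw [hcontract, wishartDeriv_self_mul, transpose_inv_regWishart_pow hδ, invMomentProdDeriv_apply,
    ← Multiset.sum_map_mul_left]
  congr 1
  refine Multiset.map_congr rfl fun k _ => ?_
  have htrace : ((regWishart δ Z)⁻¹ ^ (k + 1) * ((regWishart δ Z)⁻¹ ^ (m + 1) * wishartOf Z +
      wishartOf Z * (regWishart δ Z)⁻¹ ^ (m + 1))).trace =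
        2 * (p * regInvMoment δ (m + 1 + k) (wishartOf Z)) := by
    rw [← trace_wishartOf_mul_inv_regWishart_pow, Matrix.mul_add, trace_add, ← Matrix.mul_assoc,
      ← pow_add, trace_mul_comm, trace_mul_comm ((regWishart δ Z)⁻¹ ^ (k + 1)), Matrix.mul_assoc,
      ← pow_add, show k + 1 + (m + 1) = m + 1 + k + 1 by ring,
      show m + 1 + (k + 1) = m + 1 + k + 1 by ring, ← two_mul]
  rw [htrace, Fintype.card_fin, regInvMomentProd, ← regWishart]
  have hp : (p : ℝ) ≠ 0 := NeZero.ne _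
  field_simp

theorem sum_loopTestDeriv [NeZero n] [NeZero p] {δ : ℝ} (hδ : 0 < δ) (m : ℕ) (S : Multiset ℕ)
    (Z : Fin n → Fin p → ℝ) :
    ∑ i, ∑ j, loopTestDeriv δ m S i j Z = n * p *
      (invMomentProd ((m + 1) ::ₘ S) (regWishart δ Z) -
        (m + 1) / n * regInvMomentProd δ (m + 1) S (wishartOf Z) -
        p / n * ∑ l ∈ Finset.range (m + 1),
          regInvMomentProd δ (m - l) ((l + 1) ::ₘ S) (wishartOf Z) -
        2 / (n * p) * (S.map fun k =>
          k * regInvMomentProd δ (m + 1 + k) (S.erase k) (wishartOf Z)).sum) := by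
  have hn : (n : ℝ) ≠ 0 := NeZero.ne _
  have hp : (p : ℝ) ≠ 0 := NeZero.ne _
  have hfactor : (∑ l ∈ Finset.range (m + 1), p * regInvMoment δ (m - l) (wishartOf Z) *
      (p * invMoment (l + 1) (regWishart δ Z))) * invMomentProd S (regWishart δ Z) =
        p ^ 2 * ∑ l ∈ Finset.range (m + 1),
          regInvMomentProd δ (m - l) ((l + 1) ::ₘ S) (wishartOf Z) := by
    rw [Finset.mul_sum, Finset.sum_mul]
    refine Finset.sum_congr rfl fun l _ => ?_
    rw [regInvMomentProd, ← regWishart, invMomentProd_cons]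
    ring
  simp only [loopTestDeriv, Finset.sum_add_distrib, ← Finset.sum_mul]
  rw [sum_mulInvPowDeriv_single hδ, sum_mul_invMomentProdDeriv hδ, Finset.sum_add_distrib, sub_mul,
    add_mul, hfactor, Finset.sum_const, Finset.card_range, nsmul_eq_mul, invMomentProd_cons,
    regInvMomentProd, ← regWishart]
  push_cast
  field_simp
  ring

theorem hasFiniteMoments_regInvMomentProd {δ : ℝ} (hδ : 0 < δ) (k : ℕ) (S : Multiset ℕ) :
    HasFiniteMoments (fun Z : Fin n → Fin p → ℝ => regInvMomentProd δ k S (wishartOf Z))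
      (gaussEnsemble n p) := by
  have hP (S : Multiset ℕ) := hasFiniteMoments_invMomentProd_regWishart (n := n) (p := p) hδ S
  have hmoment (k : ℕ) := hP {k}
  simp only [invMomentProd_singleton] at hmoment
  simp only [regInvMomentProd, regInvMoment_eq (posDef_regWishart hδ _).det_pos.ne'.isUnit]
  exact .mul (.sub (hmoment k) (.const_mul δ (hmoment (k + 1)))) (hP S)

theorem integral_sum_loopTestDeriv [NeZero n] [NeZero p] {δ : ℝ} (hδ : 0 < δ) (m : ℕ)
    (S : Multiset ℕ) :
    ∑ i, ∑ j, ∫ Z, loopTestDeriv δ m S i j Z ∂gaussEnsemble n p =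
      ∑ i, ∑ j, ∫ Z, Z i j * loopTest δ m S i j Z ∂gaussEnsemble n p :=
  Finset.sum_congr rfl fun i _ => Finset.sum_congr rfl fun j _ =>
    (integral_entry_mul_gaussEnsemble i j (hasDerivAt_loopTest hδ m S i j)
      (hasFiniteMoments_loopTest hδ m S i j).integrable
      (hasFiniteMoments_loopTestDeriv hδ m S i j).integrable
      ((hasFiniteMoments_entry i j).mul (hasFiniteMoments_loopTest hδ m S i j)).integrable).symm

theorem integrable_multiset_sum_map {Ω ι : Type*} {mΩ : MeasurableSpace Ω} {μ : Measure Ω}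
    (S : Multiset ι) {f : ι → Ω → ℝ} (hf : ∀ i, Integrable (f i) μ) :
    Integrable (fun ω => (S.map fun i => f i ω).sum) μ := by
  induction S using Multiset.induction with
  | empty => simp
  | cons i S ih =>
    simp only [Multiset.map_cons, Multiset.sum_cons]
    exact (hf i).add ih

theorem integral_multiset_sum_map {Ω ι : Type*} {mΩ : MeasurableSpace Ω} {μ : Measure Ω}
    (S : Multiset ι) {f : ι → Ω → ℝ} (hf : ∀ i, Integrable (f i) μ) :
    ∫ ω, (S.map fun i => f i ω).sum ∂μ = (S.map fun i => ∫ ω, f i ω ∂μ).sum := by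
  induction S using Multiset.induction with
  | empty => simp
  | cons i S ih =>
    simp only [Multiset.map_cons, Multiset.sum_cons]
    rw [integral_add (hf i) (integrable_multiset_sum_map S hf), ih]

theorem integral_regInvMomentProd [NeZero n] [NeZero p] {δ : ℝ} (hδ : 0 < δ) (m : ℕ)
    (S : Multiset ℕ) :
    ∫ Z, regInvMomentProd δ m S (wishartOf Z) ∂gaussEnsemble n p =
      ∫ Z, invMomentProd ((m + 1) ::ₘ S) (regWishart δ Z) ∂gaussEnsemble n p -
        (m + 1) / n * ∫ Z, regInvMomentProd δ (m + 1) S (wishartOf Z) ∂gaussEnsemble n p -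
        p / n * ∑ l ∈ Finset.range (m + 1),
          ∫ Z, regInvMomentProd δ (m - l) ((l + 1) ::ₘ S) (wishartOf Z) ∂gaussEnsemble n p -
        2 / (n * p) * (S.map fun k : ℕ => k *
          ∫ Z, regInvMomentProd δ (m + 1 + k) (S.erase k) (wishartOf Z)
            ∂gaussEnsemble n p).sum := by
  have hP := (hasFiniteMoments_invMomentProd_regWishart (n := n) (p := p) hδ
    ((m + 1) ::ₘ S)).integrable
  have hR (k : ℕ) (T : Multiset ℕ) :=
    (hasFiniteMoments_regInvMomentProd (n := n) (p := p) hδ k T).integrable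
  have hint := integral_sum_loopTestDeriv (n := n) (p := p) hδ m S
  have hderiv (i : Fin n) (j : Fin p) := (hasFiniteMoments_loopTestDeriv hδ m S i j).integrable
  have htest (i : Fin n) (j : Fin p) :=
    ((hasFiniteMoments_entry i j).mul (hasFiniteMoments_loopTest hδ m S i j)).integrable
  simp only [← integral_finsetSum _ fun j _ => hderiv _ j,
    ← integral_finsetSum _ fun j _ => htest _ j] at hint
  rw [← integral_finsetSum _ fun i _ => integrable_finsetSum _ fun j _ => hderiv i j,
    ← integral_finsetSum _ fun i _ => integrable_finsetSum _ fun j _ => htest i j] at hint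
  simp only [sum_mul_loopTest, sum_loopTestDeriv hδ, integral_const_mul] at hint
  have hnp : (n * p : ℝ) ≠ 0 := mul_ne_zero (NeZero.ne _) (NeZero.ne _)
  rw [← mul_left_cancel₀ hnp hint, integral_sub ?_ ?_, integral_sub ?_ ?_, integral_sub hP ?_]
  · simp only [integral_const_mul, integral_finsetSum _ fun _ _ => hR _ _]
    rw [integral_multiset_sum_map S fun k => (hR _ _).const_mul _]
    simp only [integral_const_mul]
  · exact (hR _ _).const_mul _
  · exact hP.sub ((hR _ _).const_mul _)
  · exact (integrable_finsetSum _ fun _ _ => hR _ _).const_mul _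
  · exact (hP.sub ((hR _ _).const_mul _)).sub
      ((integrable_finsetSum _ fun _ _ => hR _ _).const_mul _)
  · exact (integrable_multiset_sum_map S fun k => (hR _ _).const_mul _).const_mul _

end LoopEquation

/-! ### A priori bounds and removal of the regularisation -/

section RemoveRegularisation

theorem integrable_of_tendsto_of_integral_le {Ω : Type*} {mΩ : MeasurableSpace Ω} {μ : Measure Ω}
    {F : ℕ → Ω → ℝ} {f : Ω → ℝ} {K : ℝ} (hF : ∀ k, Integrable (F k) μ) (hnonneg : ∀ k ω, 0 ≤ F k ω)
    (hK : ∀ k, ∫ ω, F k ω ∂μ ≤ K)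
    (hlim : ∀ᵐ ω ∂μ, Tendsto (fun k => F k ω) atTop (nhds (f ω))) : Integrable f μ := by
  refine memLp_one_iff_integrable.1 ⟨aestronglyMeasurable_of_tendsto_ae _ (fun k => (hF k).1) hlim,
    (Lp.eLpNorm_lim_le_liminf_eLpNorm (fun k => (hF k).1) f hlim).trans_lt ?_⟩
  refine (liminf_le_of_frequently_le' (.of_forall fun k => ?_)).trans_lt
    (ENNReal.ofReal_lt_top (r := K))
  rw [eLpNorm_one_eq_lintegral_enorm, ← ofReal_integral_norm_eq_lintegral_enorm (hF k)]
  simpa only [Real.norm_of_nonneg (hnonneg k _)] using ENNReal.ofReal_le_ofReal (hK k)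

variable {n p : ℕ}

theorem integrable_invMoment_regWishart {δ : ℝ} (hδ : 0 < δ) (k : ℕ) :
    Integrable (fun Z : Fin n → Fin p → ℝ => invMoment k (regWishart δ Z)) (gaussEnsemble n p) := by
  simpa only [invMomentProd_singleton] using
    (hasFiniteMoments_invMomentProd_regWishart (n := n) (p := p) hδ {k}).integrable

theorem integral_regInvMomentProd_le [NeZero p] {δ : ℝ} (hδ : 0 < δ) (k : ℕ) (S : Multiset ℕ) :
    ∫ Z, regInvMomentProd δ k S (wishartOf Z) ∂gaussEnsemble n p ≤
      ∫ Z, invMoment (k + S.sum) (regWishart δ Z) ∂gaussEnsemble n p :=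
  integral_mono (hasFiniteMoments_regInvMomentProd hδ k S).integrable
    (integrable_invMoment_regWishart hδ _) fun Z =>
      regInvMomentProd_le (posSemidef_wishartOf Z) hδ k S

/-- The expectation of the product of the inverse moments of `Y`, of the orders in `S`. -/
def expInvMomentProd (n p : ℕ) (S : Multiset ℕ) : ℝ :=
  ∫ Z : Fin n → Fin p → ℝ, invMomentProd S (wishartOf Z) ∂gaussEnsemble n p

@[simp]
theorem expInvMomentProd_zero : expInvMomentProd n p 0 = 1 := by
  simp [expInvMomentProd]

theorem expInvMomentProd_zero_cons [NeZero p] (S : Multiset ℕ) :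
    expInvMomentProd n p (0 ::ₘ S) = expInvMomentProd n p S := by
  simp only [expInvMomentProd, invMomentProd_cons, invMoment_zero, one_mul]

theorem expInvMomentProd_singleton (k : ℕ) :
    expInvMomentProd n p {k} =
      1 / (p : ℝ) * ∫ Z, ((wishartOf Z)⁻¹ ^ k).trace ∂gaussEnsemble n p := by
  simp only [expInvMomentProd, invMomentProd_singleton, invMoment, Fintype.card_fin,
    integral_div, one_div_mul_eq_div]

variable [NeZero n] [NeZero p]

theorem mul_integral_invMoment_succ_le {δ : ℝ} (hδ : 0 < δ) (m : ℕ) :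
    (1 - (m + 1) * (p + 1) / n) * ∫ Z, invMoment (m + 1) (regWishart δ Z) ∂gaussEnsemble n p ≤
      ∫ Z, invMoment m (regWishart δ Z) ∂gaussEnsemble n p := by
  set E := ∫ Z, invMoment (m + 1) (regWishart δ Z) ∂gaussEnsemble n p with hE
  have hloop := integral_regInvMomentProd (n := n) (p := p) hδ m 0
  have hsum : ∑ l ∈ Finset.range (m + 1),
      ∫ Z, regInvMomentProd δ (m - l) ((l + 1) ::ₘ 0) (wishartOf Z) ∂gaussEnsemble n p ≤
        (m + 1) * E := by
    refine (Finset.sum_le_card_nsmul _ _ E fun l hl => ?_).trans_eq (by simp)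
    have hml : m - l + (l + 1) = m + 1 := by have := Finset.mem_range.1 hl; omega
    simpa [hml] using integral_regInvMomentProd_le (n := n) (p := p) hδ (m - l) {l + 1}
  have htop := integral_regInvMomentProd_le (n := n) (p := p) hδ (m + 1) 0
  have hbot := integral_regInvMomentProd_le (n := n) (p := p) hδ m 0
  simp only [Multiset.sum_zero, add_zero, Multiset.map_zero, mul_zero, sub_zero, Multiset.cons_zero,
    invMomentProd_singleton, ← hE] at hloop htop hbot hsum
  calc (1 - (m + 1) * (p + 1) / n) * E = E - (m + 1) / n * E - p / n * ((m + 1) * E) := by ring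
    _ ≤ ∫ Z, regInvMomentProd δ m 0 (wishartOf Z) ∂gaussEnsemble n p := by
      rw [hloop]; gcongr
    _ ≤ ∫ Z, invMoment m (regWishart δ Z) ∂gaussEnsemble n p := hbot

theorem integral_invMoment_regWishart_le {δ : ℝ} (hδ : 0 < δ) {η : ℝ} (hη : 0 < η) {N : ℕ}
    (hN : η ≤ 1 - N * (p + 1) / n) :
    ∫ Z, invMoment N (regWishart δ Z) ∂gaussEnsemble n p ≤ η⁻¹ ^ N := by
  induction N with
  | zero => simp [invMoment_zero]
  | succ m ih =>
    push_cast at hN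
    have hm : η ≤ 1 - m * (p + 1) / n := hN.trans (by gcongr; linarith)
    have hnonneg : 0 ≤ ∫ Z, invMoment (m + 1) (regWishart δ Z) ∂gaussEnsemble n p :=
      integral_nonneg fun Z => invMoment_nonneg (posDef_regWishart hδ Z) _
    rw [pow_succ, ← div_eq_mul_inv, le_div_iff₀' hη]
    exact (mul_le_mul_of_nonneg_right hN hnonneg).trans
      ((mul_integral_invMoment_succ_le hδ m).trans (ih hm))

theorem ae_posDef_wishartOf (hnp : p + 1 < n) :
    ∀ᵐ Z ∂gaussEnsemble n p, (wishartOf Z).PosDef := by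
  have hn : (0 : ℝ) < n := Nat.cast_pos.2 (NeZero.pos n)
  have hp : (0 : ℝ) < p := Nat.cast_pos.2 (NeZero.pos p)
  set η : ℝ := 1 - (p + 1) / n
  have hη : 0 < η := sub_pos.2 ((div_lt_one hn).2 (mod_cast hnp))
  have hsmall (δ : ℝ) (hδ : 0 < δ) :
      (gaussEnsemble n p).real {Z | ¬ (wishartOf Z).PosDef} ≤ η⁻¹ * (p * δ) := by
    have hsubset : {Z : Fin n → Fin p → ℝ | ¬ (wishartOf Z).PosDef} ⊆
        {Z | (p * δ)⁻¹ ≤ invMoment 1 (regWishart δ Z)} := fun Z hZ => by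
      simpa only [Fintype.card_fin, Set.mem_ofPred_eq, regWishart] using
        inv_mul_le_invMoment_one_add_smul_one (posSemidef_wishartOf Z) hZ hδ
    have hmarkov := mul_meas_ge_le_integral_of_nonneg (μ := gaussEnsemble n p)
      (.of_forall fun Z => invMoment_nonneg (posDef_regWishart hδ Z) 1)
      (integrable_invMoment_regWishart hδ 1) (p * δ)⁻¹
    have hbound := integral_invMoment_regWishart_le (n := n) (p := p) hδ hη (N := 1) (by simp [η])
    rw [pow_one] at hbound
    rw [← div_le_iff₀ (by positivity), div_eq_inv_mul]
    refine (mul_le_mul_of_nonneg_left (measureReal_mono hsubset) ?_).trans (hmarkov.trans hbound)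
    positivity
  have hlim : Tendsto (fun δ : ℝ => η⁻¹ * (p * δ)) (nhdsWithin 0 (Set.Ioi 0)) (nhds 0) := by
    have hcont : Continuous fun δ : ℝ => η⁻¹ * (p * δ) := by fun_prop
    simpa using (hcont.tendsto 0).mono_left nhdsWithin_le_nhds
  have hzero : (gaussEnsemble n p).real {Z | ¬ (wishartOf Z).PosDef} = 0 :=
    (ge_of_tendsto hlim (eventually_nhdsWithin_of_forall hsmall)).antisymm measureReal_nonneg
  exact ae_iff.2 ((measureReal_eq_zero_iff).1 hzero)

theorem integrable_invMoment_wishartOf {N : ℕ} (hnp : p + 1 < n) (hNn : N * (p + 1) < n) :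
    Integrable (fun Z : Fin n → Fin p → ℝ => invMoment N (wishartOf Z)) (gaussEnsemble n p) := by
  have hη : (0 : ℝ) < 1 - N * (p + 1) / n :=
    sub_pos.2 ((div_lt_one (Nat.cast_pos.2 (NeZero.pos n))).2 (mod_cast hNn))
  have hδ (k : ℕ) : (0 : ℝ) < 1 / (k + 1) := Nat.one_div_pos_of_nat
  refine integrable_of_tendsto_of_integral_le
    (fun k => integrable_invMoment_regWishart (hδ k) N)
    (fun k Z => invMoment_nonneg (posDef_regWishart (hδ k) Z) N)
    (fun k => integral_invMoment_regWishart_le (hδ k) hη le_rfl) ?_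
  filter_upwards [ae_posDef_wishartOf hnp] with Z hZ
  simpa only [invMomentProd_singleton, regWishart, Function.comp_def] using
    (tendsto_invMomentProd_add_smul_one hZ.det_pos.ne'.isUnit {N}).comp
      tendsto_one_div_add_atTop_nhds_zero_nat

/-- Dominated convergence, with dominating function the inverse moment of order `N` of `Y`. -/
theorem tendsto_integral_of_le_invMoment {N : ℕ} (hnp : p + 1 < n) (hNn : N * (p + 1) < n)
    {F : ℝ → (Fin n → Fin p → ℝ) → ℝ} {G : (Fin n → Fin p → ℝ) → ℝ}
    (hmeas : ∀ δ > 0, AEStronglyMeasurable (F δ) (gaussEnsemble n p))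
    (hnonneg : ∀ δ > 0, ∀ Z, 0 ≤ F δ Z)
    (hle : ∀ δ > 0, ∀ Z, F δ Z ≤ invMoment N (regWishart δ Z))
    (hlim : ∀ Z, (wishartOf Z).PosDef →
      Tendsto (fun δ => F δ Z) (nhdsWithin 0 (Set.Ioi 0)) (nhds (G Z))) :
    Tendsto (fun δ => ∫ Z, F δ Z ∂gaussEnsemble n p) (nhdsWithin 0 (Set.Ioi 0))
      (nhds (∫ Z, G Z ∂gaussEnsemble n p)) := by
  have hpos := ae_posDef_wishartOf hnp
  refine tendsto_integral_filter_of_dominated_convergence _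
    (eventually_nhdsWithin_of_forall hmeas) (eventually_nhdsWithin_of_forall fun δ hδ => ?_)
    (integrable_invMoment_wishartOf hnp hNn) (hpos.mono hlim)
  filter_upwards [hpos] with Z hZ
  rw [Real.norm_of_nonneg (hnonneg δ hδ Z)]
  exact (hle δ hδ Z).trans (invMoment_add_smul_one_le hZ hδ N)

theorem tendsto_integral_invMomentProd_regWishart (hnp : p + 1 < n) {S : Multiset ℕ}
    (hSn : S.sum * (p + 1) < n) :
    Tendsto (fun δ => ∫ Z, invMomentProd S (regWishart δ Z) ∂gaussEnsemble n p)
      (nhdsWithin 0 (Set.Ioi 0)) (nhds (expInvMomentProd n p S)) :=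
  tendsto_integral_of_le_invMoment hnp hSn
    (fun _ hδ => (hasFiniteMoments_invMomentProd_regWishart hδ S).integrable.1)
    (fun _ hδ Z => invMomentProd_nonneg (posDef_regWishart hδ Z) S)
    (fun _ hδ Z => invMomentProd_le (posDef_regWishart hδ Z) S)
    fun _ hZ => (tendsto_invMomentProd_add_smul_one hZ.det_pos.ne'.isUnit S).mono_left
      nhdsWithin_le_nhds

theorem tendsto_integral_regInvMomentProd (hnp : p + 1 < n) {k : ℕ} {S : Multiset ℕ}
    (hSn : (k + S.sum) * (p + 1) < n) :
    Tendsto (fun δ => ∫ Z, regInvMomentProd δ k S (wishartOf Z) ∂gaussEnsemble n p)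
      (nhdsWithin 0 (Set.Ioi 0)) (nhds (expInvMomentProd n p (k ::ₘ S))) :=
  tendsto_integral_of_le_invMoment hnp hSn
    (fun _ hδ => (hasFiniteMoments_regInvMomentProd hδ k S).integrable.1)
    (fun _ hδ Z => regInvMomentProd_nonneg (posSemidef_wishartOf Z) hδ k S)
    (fun _ hδ Z => regInvMomentProd_le (posSemidef_wishartOf Z) hδ k S)
    fun _ hZ => tendsto_regInvMomentProd hZ k S

theorem abs_expInvMomentProd_le {η : ℝ} (hη : 0 < η) {S : Multiset ℕ} (hS : 1 ≤ S.sum)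
    (hgap : η ≤ 1 - S.sum * (p + 1) / n) : |expInvMomentProd n p S| ≤ η⁻¹ ^ S.sum := by
  have hn : (0 : ℝ) < n := Nat.cast_pos.2 (NeZero.pos n)
  have hSn : S.sum * (p + 1) < n := by
    have := (div_lt_one hn).1 (sub_pos.1 (hη.trans_le hgap))
    exact_mod_cast this
  have hlim := tendsto_integral_invMomentProd_regWishart
    ((Nat.le_mul_of_pos_left _ hS).trans_lt hSn) hSn
  refine abs_le.2 ⟨?_, ?_⟩
  · refine (neg_nonpos.2 (by positivity)).trans (ge_of_tendsto hlim
      (eventually_nhdsWithin_of_forall fun δ hδ => integral_nonneg fun Z => ?_))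
    exact invMomentProd_nonneg (posDef_regWishart hδ Z) S
  · refine le_of_tendsto hlim (eventually_nhdsWithin_of_forall fun δ hδ => ?_)
    exact (integral_mono (hasFiniteMoments_invMomentProd_regWishart hδ S).integrable
      (integrable_invMoment_regWishart hδ _) fun Z =>
        invMomentProd_le (posDef_regWishart hδ Z) S).trans
      (integral_invMoment_regWishart_le hδ hη hgap)

theorem expInvMomentProd_cons {m : ℕ} {S : Multiset ℕ}
    (hSn : (m + 1 + S.sum) * (p + 1) < n) :
    expInvMomentProd n p (m ::ₘ S) = expInvMomentProd n p ((m + 1) ::ₘ S) -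
      (m + 1) / n * expInvMomentProd n p ((m + 1) ::ₘ S) -
      p / n * ∑ l ∈ Finset.range (m + 1), expInvMomentProd n p ((m - l) ::ₘ (l + 1) ::ₘ S) -
      2 / (n * p) * (S.map fun k : ℕ =>
        k * expInvMomentProd n p ((m + 1 + k) ::ₘ S.erase k)).sum := by
  have hnp : p + 1 < n := (Nat.le_mul_of_pos_left _ (by omega)).trans_lt hSn
  have hreg {k : ℕ} {T : Multiset ℕ} (hkT : k + T.sum = m + 1 + S.sum) :=
    tendsto_integral_regInvMomentProd hnp (by rwa [hkT])
  refine tendsto_nhds_unique_of_eventuallyEq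
    (tendsto_integral_regInvMomentProd hnp ((Nat.mul_le_mul_right _ (by omega)).trans_lt hSn))
    ((((tendsto_integral_invMomentProd_regWishart hnp (S := (m + 1) ::ₘ S)
      (by simpa using hSn)).sub ((hreg rfl).const_mul _)).sub
      ((tendsto_finsetSum _ fun l hl => hreg ?_).const_mul _)).sub
      ((tendsto_multiset_sum _ fun k hk => (hreg ?_).const_mul _).const_mul _))
    (eventually_nhdsWithin_of_forall fun δ hδ => integral_regInvMomentProd hδ m S)
  · have := Finset.mem_range.1 hl
    rw [Multiset.sum_cons]
    omega
  · rw [← Multiset.sum_erase hk]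
    ring

end RemoveRegularisation

/-! ### Asymptotics of the expected products of inverse moments -/

section Asymptotics

/-- The loop equation determines the limits of all products by induction on `∑ (k² + 1)`: replacing
`m + 1` by the pair `m - l`, `l + 1` lowers this quantity. -/
theorem tendsto_multiset_prod_of_loop {ι : Type*} {u : Filter ι} {a : Multiset ℕ → ι → ℝ}
    {c : ℕ → ℝ} {α : ℝ} {N : ℕ} (hα : α < 1) (hc0 : c 0 = 1)
    (hc : ∀ m, (1 - α) * c (m + 1) = c m + α * ∑ l ∈ Finset.range m, c (m - l) * c (l + 1))
    (ha0 : Tendsto (a 0) u (nhds 1)) (hzero : ∀ S, a (0 ::ₘ S) =ᶠ[u] a S)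
    (hloop : ∀ m S, m + 1 + S.sum ≤ N → Tendsto (fun i => (1 - α) * a ((m + 1) ::ₘ S) i -
      a (m ::ₘ S) i - α * ∑ l ∈ Finset.range m, a ((m - l) ::ₘ (l + 1) ::ₘ S) i) u (nhds 0))
    (S : Multiset ℕ) (hS : S.sum ≤ N) : Tendsto (a S) u (nhds (S.map c).prod) := by
  induction hrank : (S.map fun k => k ^ 2 + 1).sum using Nat.strong_induction_on generalizing S with
  | _ r ih =>
  obtain rfl | ⟨k, hk⟩ := S.empty_or_exists_mem
  · simpa using ha0
  obtain ⟨T, rfl⟩ := Multiset.exists_cons_of_mem hk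
  rw [Multiset.map_cons, Multiset.sum_cons] at hrank
  rw [Multiset.sum_cons] at hS
  obtain _ | m := k
  · refine Tendsto.congr' (hzero T).symm ?_
    simpa [hc0] using ih _ (by omega) T (by omega) rfl
  have hprev := ih _ (by simp only [← hrank, Multiset.map_cons, Multiset.sum_cons]; gcongr; omega)
    (m ::ₘ T) (by simp; omega) rfl
  have hsplit : ∀ l ∈ Finset.range m, Tendsto (a ((m - l) ::ₘ (l + 1) ::ₘ T)) u
      (nhds (((m - l) ::ₘ (l + 1) ::ₘ T).map c).prod) := fun l hl => by
    obtain ⟨d, rfl⟩ := Nat.exists_eq_add_of_lt (Finset.mem_range.1 hl)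
    refine ih _ ?_ _ ?_ rfl
    · rw [← hrank, Multiset.map_cons, Multiset.sum_cons, Multiset.map_cons, Multiset.sum_cons,
        add_assoc l, add_tsub_cancel_left]
      nlinarith
    · rw [Multiset.sum_cons, Multiset.sum_cons]
      omega
  have hlim := ((hloop m T hS).add hprev).add ((tendsto_finsetSum _ hsplit).const_mul α)
  have h1α : 1 - α ≠ 0 := (sub_pos.2 hα).ne'
  refine ((hlim.const_mul (1 - α)⁻¹).congr fun i => ?_).trans_eq ?_
  · field_simp
    ring
  · simp only [Multiset.map_cons, Multiset.prod_cons, ← mul_assoc, ← Finset.sum_mul, zero_add]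
    rw [← add_mul, ← hc m, mul_assoc, inv_mul_cancel_left₀ h1α]

variable {α : ℝ} {p : ℕ → ℕ}

theorem tendsto_mul_add_one_div (hα : Tendsto (fun n => (p n : ℝ) / n) atTop (nhds α)) (x : ℝ) :
    Tendsto (fun n => x * (p n + 1) / n) atTop (nhds (x * α)) := by
  have hlim := (hα.add tendsto_one_div_atTop_nhds_zero_nat).const_mul x
  rw [add_zero] at hlim
  exact hlim.congr fun n => by ring

theorem eventually_mul_add_one_lt (hα : Tendsto (fun n => (p n : ℝ) / n) atTop (nhds α)) {N : ℕ}
    (hN : N * α < 1) : ∀ᶠ n : ℕ in atTop, N * (p n + 1) < n := by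
  filter_upwards [(tendsto_mul_add_one_div hα N).eventually_lt_const hN, eventually_gt_atTop 0]
    with n hlt hn
  exact_mod_cast (div_lt_one (Nat.cast_pos.2 hn)).1 hlt

theorem isBigO_expInvMomentProd (hp : Tendsto p atTop atTop)
    (hα : Tendsto (fun n => (p n : ℝ) / n) atTop (nhds α)) {S : Multiset ℕ} (hS : 1 ≤ S.sum)
    (hSα : S.sum * α < 1) :
    (fun n => expInvMomentProd n (p n) S) =O[atTop] fun _ => (1 : ℝ) := by
  obtain ⟨β, hSβ, hβ⟩ := exists_between hSα
  refine .of_bound ((1 - β)⁻¹ ^ S.sum) ?_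
  filter_upwards [(tendsto_mul_add_one_div hα S.sum).eventually_le_const hSβ,
    eventually_ne_atTop 0, hp.eventually_ne_atTop 0] with n hgap hn hpn
  have : NeZero n := ⟨hn⟩
  have : NeZero (p n) := ⟨hpn⟩
  simpa using abs_expInvMomentProd_le (sub_pos.2 hβ) hS (sub_le_sub_left hgap 1)

theorem tendsto_mul_expInvMomentProd (hp : Tendsto p atTop atTop)
    (hα : Tendsto (fun n => (p n : ℝ) / n) atTop (nhds α)) {x : ℕ → ℝ}
    (hx : Tendsto x atTop (nhds 0)) {S : Multiset ℕ} (hS : 1 ≤ S.sum) (hSα : S.sum * α < 1) :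
    Tendsto (fun n => x n * expInvMomentProd n (p n) S) atTop (nhds 0) := by
  have hmul := ((Asymptotics.isLittleO_one_iff ℝ).2 hx).mul_isBigO
    (isBigO_expInvMomentProd hp hα hS hSα)
  simpa only [mul_one, Asymptotics.isLittleO_one_iff] using hmul

theorem tendsto_expInvMomentProd_loop (hp : Tendsto p atTop atTop)
    (hα : Tendsto (fun n => (p n : ℝ) / n) atTop (nhds α)) (m : ℕ) (S : Multiset ℕ)
    (hSα : (m + 1 + S.sum : ℕ) * α < 1) :
    Tendsto (fun n => (1 - α) * expInvMomentProd n (p n) ((m + 1) ::ₘ S) -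
      expInvMomentProd n (p n) (m ::ₘ S) -
      α * ∑ l ∈ Finset.range m, expInvMomentProd n (p n) ((m - l) ::ₘ (l + 1) ::ₘ S))
      atTop (nhds 0) := by
  have hzero {x : ℕ → ℝ} (hx : Tendsto x atTop (nhds 0)) {T : Multiset ℕ}
      (hT : T.sum = m + 1 + S.sum) :=
    tendsto_mul_expInvMomentProd hp hα hx (S := T) (by omega) (by rwa [hT])
  have hratio : Tendsto (fun n => (p n : ℝ) / n - α) atTop (nhds 0) := by
    simpa using hα.sub_const α
  have hinv : Tendsto (fun n : ℕ => (n : ℝ)⁻¹) atTop (nhds 0) := tendsto_inv_atTop_nhds_zero_nat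
  have hcross (k : ℕ) : Tendsto (fun n : ℕ => 2 / (n * p n) * (k : ℝ)) atTop (nhds 0) := by
    have h := ((hinv.mul (hinv.comp hp)).const_mul 2).mul_const (k : ℝ)
    simp only [mul_zero, zero_mul] at h
    exact h.congr fun n => by simp only [Function.comp_apply]; ring
  have hdiag : Tendsto (fun n : ℕ => (m + 1 : ℝ) / n) atTop (nhds 0) :=
    tendsto_const_div_atTop_nhds_zero_nat _
  have hlim := (((hzero hratio (T := (m + 1) ::ₘ S) (by simp)).add
    (hzero hdiag (T := (m + 1) ::ₘ S) (by simp))).add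
    (tendsto_finsetSum (Finset.range m) fun l hl => hzero hratio
      (T := (m - l) ::ₘ (l + 1) ::ₘ S)
      (by have := Finset.mem_range.1 hl; simp only [Multiset.sum_cons]; omega))).add
    (tendsto_multiset_sum S fun k hk => hzero (hcross k) (T := (m + 1 + k) ::ₘ S.erase k)
      (by rw [Multiset.sum_cons, ← Multiset.sum_erase hk]; ring))
  simp only [Finset.sum_const_zero, Multiset.map_const', Multiset.sum_replicate, smul_zero,
    add_zero] at hlim
  refine hlim.congr' ?_
  filter_upwards [eventually_mul_add_one_lt hα hSα, eventually_ne_atTop 0,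
    hp.eventually_ne_atTop 0] with n hlt hn hpn
  have : NeZero n := ⟨hn⟩
  have : NeZero (p n) := ⟨hpn⟩
  rw [expInvMomentProd_cons hlt, Finset.sum_range_succ, tsub_self, expInvMomentProd_zero_cons,
    ← Finset.mul_sum]
  simp only [mul_assoc, Multiset.sum_map_mul_left]
  ring

end Asymptotics

/-! ### Inverse moments of the Marchenko–Pastur law -/

section MarchenkoPastur

/-- The inverse moment `∫ t⁻ᵐ` of the Marchenko–Pastur law with parameter `r ^ 2`. Parametrising by
`r` rather than by its square avoids square roots. -/
def mpInvMoment (r : ℝ) (m : ℕ) : ℝ :=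
  ∫ t in ((1 - r) ^ 2)..((1 + r) ^ 2),
    Real.sqrt (((1 + r) ^ 2 - t) * (t - (1 - r) ^ 2)) / (2 * Real.pi * r ^ 2 * t ^ (m + 1))

/-- `|e^{iθ} - r|²`, the denominator of the Poisson kernel of the unit disc at the real point `r`.
On `[0, π]` it parametrises the support of the Marchenko–Pastur law. -/
def poissonDenom (r θ : ℝ) : ℝ :=
  1 + r ^ 2 - 2 * r * Real.cos θ

theorem norm_circleMap_sub_ofReal_sq (r θ : ℝ) :
    ‖circleMap 0 1 θ - r‖ ^ 2 = poissonDenom r θ := by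
  rw [← Complex.normSq_eq_norm_sq, circleMap_zero, Complex.exp_mul_I, Complex.normSq_apply]
  simp only [Complex.ofReal_one, one_mul, Complex.sub_re, Complex.add_re, Complex.mul_re,
    Complex.I_re, Complex.I_im, Complex.sub_im, Complex.add_im, Complex.mul_im, Complex.ofReal_re,
    Complex.ofReal_im, ← Complex.ofReal_cos, ← Complex.ofReal_sin, poissonDenom]
  linear_combination Real.sin_sq_add_cos_sq θ

theorem continuous_poissonDenom (r : ℝ) : Continuous (poissonDenom r) := by
  unfold poissonDenom
  fun_prop

theorem hasDerivAt_poissonDenom (r θ : ℝ) :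
    HasDerivAt (poissonDenom r) (2 * r * Real.sin θ) θ :=
  (((Real.hasDerivAt_cos θ).const_mul (2 * r)).const_sub (1 + r ^ 2)).congr_deriv (by ring)

theorem sq_one_sub_le_poissonDenom {r : ℝ} (hr : 0 ≤ r) (θ : ℝ) :
    (1 - r) ^ 2 ≤ poissonDenom r θ := by
  unfold poissonDenom
  nlinarith [mul_nonneg hr (sub_nonneg.2 (Real.cos_le_one θ))]

theorem poissonDenom_pos {r : ℝ} (hr0 : 0 ≤ r) (hr1 : r < 1) (θ : ℝ) : 0 < poissonDenom r θ :=
  (pow_pos (sub_pos.2 hr1) 2).trans_le (sq_one_sub_le_poissonDenom hr0 θ)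

theorem integral_zero_two_mul_of_reflect {E : Type*} [NormedAddCommGroup E] [NormedSpace ℝ E]
    {f : ℝ → E} {a : ℝ} (hf : Continuous f) (hsymm : ∀ x, f (2 * a - x) = f x) :
    ∫ x in (0 : ℝ)..2 * a, f x = (2 : ℝ) • ∫ x in (0 : ℝ)..a, f x := by
  have hreflect : ∫ x in a..2 * a, f x = ∫ x in (0 : ℝ)..a, f x := by
    have h := intervalIntegral.integral_comp_sub_left (a := 0) (b := a) f (2 * a)
    simp only [hsymm] at h
    rw [h, sub_zero, two_mul, add_sub_cancel_right]
  rw [← intervalIntegral.integral_add_adjacent_intervals (hf.intervalIntegrable 0 a)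
    (hf.intervalIntegrable _ _), hreflect, two_smul]

/-- On the unit circle `sin² θ` is the real part of `(1 - z²) / 2`, so the Poisson formula at `r`
evaluates the integral. -/
theorem integral_sin_sq_div_poissonDenom {r : ℝ} (hr0 : 0 ≤ r) (hr1 : r < 1) :
    ∫ θ in (0 : ℝ)..Real.pi, Real.sin θ ^ 2 / poissonDenom r θ = Real.pi / 2 := by
  have hharm : InnerProductSpace.HarmonicOnNhd (fun z : ℂ => ((1 - z ^ 2) / 2).re)
      (Metric.closedBall 0 1) := fun z _ => AnalyticAt.harmonicAt_re (by fun_prop)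
  have hpoisson := hharm.circleAverage_poissonKernel_smul (w := (r : ℂ))
    (by simpa [abs_of_nonneg hr0] using hr1)
  have hintegrand : ∀ θ : ℝ, (poissonKernel 0 (r : ℂ) • fun z : ℂ => ((1 - z ^ 2) / 2).re)
      (circleMap 0 1 θ) = (1 - r ^ 2) * (Real.sin θ ^ 2 / poissonDenom r θ) := fun θ => by
    have hre : ((1 - circleMap 0 1 θ ^ 2) / 2).re = Real.sin θ ^ 2 := by
      have hz : circleMap 0 1 θ ^ 2 = Complex.exp ((2 * θ : ℝ) * Complex.I) := by
        rw [circleMap_zero, Complex.ofReal_one, one_mul, ← Complex.exp_nat_mul]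
        push_cast
        ring_nf
      rw [hz, Complex.div_ofNat_re, Complex.sub_re, Complex.one_re, Complex.exp_ofReal_mul_I_re,
        Real.sin_sq_eq_half_sub]
      ring
    rw [Pi.smul_apply', hre, poissonKernel_def, sub_zero, sub_zero, norm_circleMap_sub_ofReal_sq,
      norm_circleMap_zero, abs_one, one_pow, Complex.norm_real, Real.norm_eq_abs, sq_abs,
      smul_eq_mul, div_mul_eq_mul_div, mul_div_assoc]
  have hcont : Continuous fun θ => Real.sin θ ^ 2 / poissonDenom r θ :=
    (by fun_prop : Continuous fun θ => Real.sin θ ^ 2).div (continuous_poissonDenom r)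
      fun θ => (poissonDenom_pos hr0 hr1 θ).ne'
  have hvalue : ((1 - (r : ℂ) ^ 2) / 2).re = (1 - r ^ 2) / 2 := by norm_cast
  rw [Real.circleAverage_def, hvalue] at hpoisson
  simp only [hintegrand, intervalIntegral.integral_const_mul, smul_eq_mul] at hpoisson
  rw [integral_zero_two_mul_of_reflect hcont fun θ => by simp [poissonDenom], smul_eq_mul]
    at hpoisson
  have hr : 1 - r ^ 2 ≠ 0 := by nlinarith
  field_simp at hpoisson
  linarith

theorem mpInvMoment_eq_integral_sin_sq {r : ℝ} (hr0 : 0 < r) (hr1 : r < 1) (m : ℕ) :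
    mpInvMoment r m =
      2 / Real.pi * ∫ θ in (0 : ℝ)..Real.pi, Real.sin θ ^ 2 / poissonDenom r θ ^ (m + 1) := by
  have hsub := intervalIntegral.integral_comp_mul_deriv' (a := 0) (b := Real.pi)
    (g := fun t => Real.sqrt (((1 + r) ^ 2 - t) * (t - (1 - r) ^ 2)) /
      (2 * Real.pi * r ^ 2 * t ^ (m + 1)))
    (fun θ _ => hasDerivAt_poissonDenom r θ) (by fun_prop) (by
      refine ContinuousOn.div (by fun_prop) (by fun_prop) ?_
      rintro _ ⟨θ, -, rfl⟩
      have := poissonDenom_pos hr0.le hr1 θ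
      positivity)
  have hleft : poissonDenom r 0 = (1 - r) ^ 2 := by simp only [poissonDenom, Real.cos_zero]; ring
  have hright : poissonDenom r Real.pi = (1 + r) ^ 2 := by
    simp only [poissonDenom, Real.cos_pi]; ring
  rw [hleft, hright] at hsub
  rw [mpInvMoment, ← hsub, ← intervalIntegral.integral_const_mul]
  refine intervalIntegral.integral_congr fun θ hθ => ?_
  rw [Set.uIcc_of_le Real.pi_pos.le] at hθ
  have hsin := Real.sin_nonneg_of_mem_Icc hθ
  have hsq : ((1 + r) ^ 2 - poissonDenom r θ) * (poissonDenom r θ - (1 - r) ^ 2) =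
      (2 * r * Real.sin θ) ^ 2 := by
    rw [mul_pow, Real.sin_sq, poissonDenom]
    ring
  have hne := (poissonDenom_pos hr0.le hr1 θ).ne'
  simp only [Function.comp_apply]
  rw [hsq, Real.sqrt_sq (by positivity)]
  field_simp

theorem hasSum_div_pow_succ_mul_pow {t x : ℝ} (hx : |x| < t) (b : ℝ) :
    HasSum (fun m : ℕ => b / t ^ (m + 1) * x ^ m) (b / (t - x)) := by
  have ht : 0 < t := (abs_nonneg x).trans_lt hx
  have hratio : |x / t| < 1 := by rwa [abs_div, abs_of_pos ht, div_lt_one ht]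
  have hgeom := (hasSum_geometric_of_abs_lt_one hratio).mul_left (b / t)
  rw [one_sub_div ht.ne', inv_div, div_mul_div_cancel₀ ht.ne'] at hgeom
  refine hgeom.congr_fun fun m => ?_
  rw [div_pow, pow_succ]
  field_simp

theorem hasSum_mpInvMoment_mul_pow {r x : ℝ} (hr0 : 0 < r) (hr1 : r < 1)
    (hx : |x| < (1 - r) ^ 2) :
    HasSum (fun m => mpInvMoment r m * x ^ m) (2 / Real.pi *
      ∫ θ in (0 : ℝ)..Real.pi, Real.sin θ ^ 2 / (poissonDenom r θ - x)) := by
  have hle := sq_one_sub_le_poissonDenom hr0.le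
  have ha : 0 < (1 - r) ^ 2 := (abs_nonneg x).trans_lt hx
  have hD := fun θ => ha.trans_le (hle θ)
  have hterm : ∀ m, mpInvMoment r m * x ^ m = 2 / Real.pi *
      ∫ θ in (0 : ℝ)..Real.pi, Real.sin θ ^ 2 / poissonDenom r θ ^ (m + 1) * x ^ m := fun m => by
    rw [mpInvMoment_eq_integral_sin_sq hr0 hr1, intervalIntegral.integral_mul_const, mul_assoc]
  simp only [hterm]
  refine HasSum.mul_left _ <| intervalIntegral.hasSum_integral_of_dominated_convergence
    (fun m _ => 1 / ((1 - r) ^ 2) ^ (m + 1) * |x| ^ m) (fun m => ?_)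
    (fun m => Eventually.of_forall fun θ _ => ?_) (Eventually.of_forall fun _ _ => ?_)
    intervalIntegrable_const (Eventually.of_forall fun θ _ => ?_)
  · have hcont := continuous_poissonDenom r
    exact (((by fun_prop : Continuous fun θ => Real.sin θ ^ 2).div (by fun_prop)
      fun θ => (pow_pos (hD θ) _).ne').mul continuous_const).aestronglyMeasurable
  · rw [norm_mul, norm_div, norm_pow, norm_pow, norm_pow, Real.norm_eq_abs, Real.norm_eq_abs,
      Real.norm_eq_abs, abs_of_pos (hD θ), sq_abs]
    gcongr
    exacts [Real.sin_sq_le_one θ, hle θ]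
  · exact (hasSum_div_pow_succ_mul_pow (by rwa [abs_abs]) 1).summable
  · exact hasSum_div_pow_succ_mul_pow (hx.trans_le (hle θ)) _

/-- With `q = r u` the quadratic equation says that `|e^{iθ} - r|² - x = |e^{iθ} - q|² / u`. -/
theorem integral_sin_sq_div_poissonDenom_sub {r u x : ℝ} (hr : 0 ≤ r) (hu : 0 < u)
    (hru : r * u < 1) (hquad : r ^ 2 * u ^ 2 - (1 + r ^ 2 - x) * u + 1 = 0) :
    2 / Real.pi * ∫ θ in (0 : ℝ)..Real.pi, Real.sin θ ^ 2 / (poissonDenom r θ - x) = u := by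
  have hscale : ∀ θ, Real.sin θ ^ 2 / (poissonDenom r θ - x) =
      u * (Real.sin θ ^ 2 / poissonDenom (r * u) θ) := fun θ => by
    have : poissonDenom (r * u) θ = u * (poissonDenom r θ - x) := by
      unfold poissonDenom
      linear_combination hquad
    rw [this, ← mul_div_assoc, mul_div_mul_left _ _ hu.ne']
  simp only [hscale]
  rw [intervalIntegral.integral_const_mul,
    integral_sin_sq_div_poissonDenom (mul_nonneg hr hu.le) hru]
  field_simp

theorem exists_root_mpStieltjes {r x : ℝ} (hr0 : 0 < r) (hx : x < (1 - r) ^ 2) :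
    ∃ u, 0 < u ∧ r * u < 1 ∧ r ^ 2 * u ^ 2 - (1 + r ^ 2 - x) * u + 1 = 0 := by
  have hdisc : 0 < (1 + r ^ 2 - x) ^ 2 - 4 * r ^ 2 := by nlinarith
  have hw := Real.sq_sqrt hdisc.le
  have hw0 := Real.sqrt_pos.2 hdisc
  set w := Real.sqrt ((1 + r ^ 2 - x) ^ 2 - 4 * r ^ 2)
  have hden : 2 * r < 1 + r ^ 2 - x + w := by linarith
  have hden0 : 0 < 1 + r ^ 2 - x + w := by linarith
  refine ⟨2 / (1 + r ^ 2 - x + w), by positivity, ?_, ?_⟩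
  · rwa [mul_div_assoc', div_lt_one hden0, mul_comm]
  · field_simp
    linear_combination hw

theorem mpInvMoment_zero {r : ℝ} (hr0 : 0 < r) (hr1 : r < 1) : mpInvMoment r 0 = 1 := by
  have h := integral_sin_sq_div_poissonDenom_sub (u := 1) (x := 0) hr0.le one_pos (by simpa)
    (by ring)
  simpa only [mpInvMoment_eq_integral_sin_sq hr0 hr1, sub_zero, zero_add, pow_one] using h

theorem hasSum_coeff_mul_mul_pow {𝕜 : Type*} [RCLike 𝕜] {f g : PowerSeries 𝕜} {x a b : 𝕜}
    (hf : HasSum (fun n => PowerSeries.coeff n f * x ^ n) a)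
    (hg : HasSum (fun n => PowerSeries.coeff n g * x ^ n) b) :
    HasSum (fun n => PowerSeries.coeff n (f * g) * x ^ n) (a * b) := by
  have hf' := summable_norm_iff.2 hf.summable
  have hg' := summable_norm_iff.2 hg.summable
  have hsum := (summable_norm_sum_mul_antidiagonal_of_summable_norm hf' hg').of_norm.hasSum
  rw [← tsum_mul_tsum_eq_tsum_sum_antidiagonal_of_summable_norm hf' hg', hf.tsum_eq,
    hg.tsum_eq] at hsum
  refine hsum.congr_fun fun n => ?_
  rw [PowerSeries.coeff_mul, Finset.sum_mul]
  refine Finset.sum_congr rfl fun k hk => ?_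
  rw [← Finset.HasAntidiagonal.mem_antidiagonal.1 hk, pow_add]
  ring

theorem eq_zero_of_eventually_hasSum_coeff_mul_pow {𝕜 : Type*} [NontriviallyNormedField 𝕜]
    {f : PowerSeries 𝕜}
    (hf : ∀ᶠ x in nhds (0 : 𝕜), HasSum (fun n => PowerSeries.coeff n f * x ^ n) 0) : f = 0 := by
  have hseries : HasFPowerSeriesAt (fun _ : 𝕜 => (0 : 𝕜))
      (FormalMultilinearSeries.ofScalars 𝕜 fun n => PowerSeries.coeff n f) 0 := by
    rw [hasFPowerSeriesAt_iff]
    filter_upwards [hf] with x hx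
    simpa [FormalMultilinearSeries.coeff_ofScalars, mul_comm] using hx
  ext n
  rw [← FormalMultilinearSeries.coeff_ofScalars (𝕜 := 𝕜)
    (p := fun n => PowerSeries.coeff n f), hseries.eq_zero]
  rfl

open PowerSeries in
theorem mk_mpInvMoment_quadratic {r : ℝ} (hr0 : 0 < r) (hr1 : r < 1) :
    C (r ^ 2) * (mk (mpInvMoment r) * mk (mpInvMoment r)) - (C (1 + r ^ 2) - X) * mk (mpInvMoment r)
      + 1 = 0 := by
  refine eq_zero_of_eventually_hasSum_coeff_mul_pow ?_
  have hnhds : ∀ᶠ x : ℝ in nhds 0, |x| < (1 - r) ^ 2 :=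
    continuous_abs.continuousAt.eventually_lt continuousAt_const
      (by simpa using pow_pos (sub_pos.2 hr1) 2)
  filter_upwards [hnhds] with x hx
  obtain ⟨u, hu, hru, hquad⟩ := exists_root_mpStieltjes hr0 ((le_abs_self x).trans_lt hx)
  have hmk : HasSum (fun n => coeff n (mk (mpInvMoment r)) * x ^ n) u := by
    simpa only [coeff_mk, integral_sin_sq_div_poissonDenom_sub hr0.le hu hru hquad] using
      hasSum_mpInvMoment_mul_pow hr0 hr1 hx
  have hC : ∀ b : ℝ, HasSum (fun n => coeff n (C b) * x ^ n) b := fun b => by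
    simpa using hasSum_single (f := fun n => coeff n (C b) * x ^ n) 0
      fun n hn => by simp [coeff_C, hn]
  have hX : HasSum (fun n => coeff n X * x ^ n) x := by
    simpa using hasSum_single (f := fun n => coeff n X * x ^ n) 1
      fun n hn => by simp [coeff_X, hn]
  have hlin : HasSum (fun n => coeff n (C (1 + r ^ 2) - X) * x ^ n) (1 + r ^ 2 - x) := by
    simpa only [map_sub, sub_mul] using (hC (1 + r ^ 2)).sub hX
  have hsum := ((hasSum_coeff_mul_mul_pow (hC (r ^ 2)) (hasSum_coeff_mul_mul_pow hmk hmk)).sub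
    (hasSum_coeff_mul_mul_pow hlin hmk)).add (hC 1)
  rw [← sq u, hquad] at hsum
  simpa only [map_add, map_sub, map_one, add_mul, sub_mul] using hsum

theorem mpInvMoment_succ {r : ℝ} (hr0 : 0 < r) (hr1 : r < 1) (m : ℕ) :
    (1 - r ^ 2) * mpInvMoment r (m + 1) = mpInvMoment r m +
      r ^ 2 * ∑ l ∈ Finset.range m, mpInvMoment r (m - l) * mpInvMoment r (l + 1) := by
  have h := congrArg (PowerSeries.coeff (m + 1)) (mk_mpInvMoment_quadratic hr0 hr1)
  rw [sub_mul, map_add, map_sub, map_sub, PowerSeries.coeff_C_mul, PowerSeries.coeff_C_mul,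
    PowerSeries.coeff_succ_X_mul, PowerSeries.coeff_one, if_neg m.succ_ne_zero, map_zero,
    PowerSeries.coeff_mul] at h
  simp only [PowerSeries.coeff_mk] at h
  rw [Finset.Nat.sum_antidiagonal_eq_sum_range_succ fun i j => mpInvMoment r i * mpInvMoment r j,
    Finset.sum_range_succ', Finset.sum_range_succ] at h
  simp only [Nat.sub_zero, Nat.sub_self, Nat.add_sub_add_right, mpInvMoment_zero hr0 hr1] at h
  simp only [mul_comm (mpInvMoment r (m - _))]
  linear_combination -h

end MarchenkoPastur

theorem inverse_wishart_trace_limit_mp_general (α : ℝ) (hα0 : 0 < α) (hα1 : α < 1)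
    (s : ℕ) (hsα : s * α < 1) (p : ℕ → ℕ)
    (hpinf : Filter.Tendsto (fun n => (p n : ℝ)) Filter.atTop Filter.atTop)
    (hα : Filter.Tendsto (fun n => (p n : ℝ) / (n : ℝ)) Filter.atTop (nhds α)) :
    Filter.Tendsto (fun n =>
      (1 / (p n : ℝ)) *
        ∫ Z, Matrix.trace ((wishartOf Z)⁻¹ ^ s) ∂gaussEnsemble n (p n))
      Filter.atTop
      (nhds (∫ t in ((1 - Real.sqrt α) ^ 2)..((1 + Real.sqrt α) ^ 2),
        Real.sqrt (((1 + Real.sqrt α) ^ 2 - t) * (t - (1 - Real.sqrt α) ^ 2)) /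
          (2 * Real.pi * α * t ^ (s + 1)))) := by
  obtain ⟨r, hr0, rfl⟩ : ∃ r, 0 < r ∧ α = r ^ 2 :=
    ⟨Real.sqrt α, Real.sqrt_pos.2 hα0, (Real.sq_sqrt hα0.le).symm⟩
  have hr1 : r < 1 := (sq_lt_one_iff₀ hr0.le).1 hα1
  have hp : Tendsto p atTop atTop := tendsto_natCast_atTop_iff.1 hpinf
  have hlim : Tendsto (fun n => expInvMomentProd n (p n) {s}) atTop
      (nhds (Multiset.map (mpInvMoment r) {s}).prod) := by
    refine tendsto_multiset_prod_of_loop (a := fun S n => expInvMomentProd n (p n) S) (N := s) hα1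
      (mpInvMoment_zero hr0 hr1) (mpInvMoment_succ hr0 hr1) (by simp) (fun S => ?_)
      (fun m S hS => tendsto_expInvMomentProd_loop hp hα m S (hsα.trans_le' ?_)) _ (by simp)
    · filter_upwards [hp.eventually_ne_atTop 0] with n hn
      have : NeZero (p n) := ⟨hn⟩
      exact expInvMomentProd_zero_cons S
    · gcongr
  rw [Real.sqrt_sq hr0.le]
  simpa only [expInvMomentProd_singleton, Multiset.map_singleton, Multiset.prod_singleton,
    mpInvMoment] using hlim

/-- (Marchenko–Pastur limit of inverse Wishart trace moments.)  Let
`α ∈ (0,1)`, let `s ≥ 1` be an integer with `s < 1/α - 1`, and suppose `p(n) → ∞` and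
`p(n)/n → α`.  Then `(1/p(n)) E[tr(Y^{-s})]` converges to
`∫_{α₋}^{α₊} √((α₊-t)(t-α₋))/(2παt^{s+1}) dt`, with `α₊ = (1+√α)²`, `α₋ = (1-√α)²`. -/
theorem inverse_wishart_trace_limit_mp (α : ℝ) (hα0 : 0 < α) (hα1 : α < 1)
    (s : ℕ) (hs : 1 ≤ s) (hsα : (s : ℝ) < 1 / α - 1) (p : ℕ → ℕ)
    (hpinf : Filter.Tendsto (fun n => (p n : ℝ)) Filter.atTop Filter.atTop)
    (hα : Filter.Tendsto (fun n => (p n : ℝ) / (n : ℝ)) Filter.atTop (nhds α)) :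
    Filter.Tendsto (fun n =>
      (1 / (p n : ℝ)) *
        ∫ Z, Matrix.trace ((wishartOf Z)⁻¹ ^ s) ∂gaussEnsemble n (p n))
      Filter.atTop
      (nhds (∫ t in ((1 - Real.sqrt α) ^ 2)..((1 + Real.sqrt α) ^ 2),
        Real.sqrt (((1 + Real.sqrt α) ^ 2 - t) * (t - (1 - Real.sqrt α) ^ 2)) /
          (2 * Real.pi * α * t ^ (s + 1)))) := by
  have hsα' : s * α < 1 := (lt_div_iff₀ hα0).1 (by linarith)
  exact inverse_wishart_trace_limit_mp_general α hα0 hα1 s hsα' p hpinf hα
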